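/- arXiv:1712.03676 — 5 statements merged into one kernel-verified Lean document; each statement's English description precedes it below -/
import Mathlib

section
/- Let 0 < c < 1 and let μ be the uniform probability measure on {−1, 1} ⊂ ℝ. Define V : ℝ → ℝ by V(ψ) = −log ∫ exp(−c(ψ − σ)²/2) dμ(σ). Then V is smooth and for every ψ ∈ ℝ, V''(ψ) = c − c²(1 − tanh(cψ)²) ≥ c − c² > 0. In particular V(ψ) − (c − c²)ψ²/2 is convex on ℝ. -/
/-!
Expanding the squares gives `V ψ = c (ψ² + 1) / 2 - log (cosh (c ψ))`. Differentiating twice,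
`V' ψ = c ψ - c tanh (c ψ)` and `V'' ψ = c - c² (1 - tanh² (c ψ))`, because `(log cosh)' = tanh` and
`tanh' = 1 - tanh²`. The lower bound is `tanh² ≥ 0`, and convexity of `V ψ - (c - c²) ψ² / 2` is
nonnegativity of its second derivative `c² tanh² (c ψ)`.
-/

open Real

lemma hasDerivAt_tanh_mul (c x : ℝ) :
    HasDerivAt (fun y => Real.tanh (c * y)) (c * (1 - Real.tanh (c * x) ^ 2)) x := by
  have hlin : HasDerivAt (fun y : ℝ => c * y) c x := by
    simpa using (hasDerivAt_id x).const_mul c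
  have hpos := Real.cosh_pos (c * x)
  have h := hlin.sinh.div hlin.cosh hpos.ne'
  have hfun : (fun y => Real.tanh (c * y)) =
      (fun y => Real.sinh (c * y)) / fun y => Real.cosh (c * y) := by
    funext y
    simp [Real.tanh_eq_sinh_div_cosh]
  rw [hfun]
  refine h.congr_deriv ?_
  rw [Real.tanh_eq_sinh_div_cosh]
  field_simp

lemma hasDerivAt_log_cosh_mul (c x : ℝ) :
    HasDerivAt (fun y => Real.log (Real.cosh (c * y))) (c * Real.tanh (c * x)) x := by
  have hlin : HasDerivAt (fun y : ℝ => c * y) c x := by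
    simpa using (hasDerivAt_id x).const_mul c
  convert hlin.cosh.log (Real.cosh_pos (c * x)).ne' using 1
  rw [Real.tanh_eq_sinh_div_cosh]
  ring

/-- The Gaussian factor `exp (-c (x² + 1) / 2)` is common to both spins and splits off, leaving
the average of `exp (± c x)`. -/
lemma neg_log_gaussian_average (c x : ℝ) :
    -Real.log ((Real.exp (-(c * (x - 1) ^ 2) / 2)
        + Real.exp (-(c * (x + 1) ^ 2) / 2)) / 2) =
      c * (x ^ 2 + 1) / 2 - Real.log (Real.cosh (c * x)) := by
  have h : (Real.exp (-(c * (x - 1) ^ 2) / 2) + Real.exp (-(c * (x + 1) ^ 2) / 2)) / 2 =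
      Real.exp (-(c * (x ^ 2 + 1) / 2)) * Real.cosh (c * x) := by
    rw [Real.cosh_eq, mul_div_assoc', mul_add, ← Real.exp_add, ← Real.exp_add]
    ring_nf
  rw [h, Real.log_mul (Real.exp_pos _).ne' (Real.cosh_pos _).ne', Real.log_exp]
  ring

/-- The renormalised single-spin potential for Ising spins:
`V(ψ) = -log ∫ e^{-c(ψ-σ)²/2} dμ(σ)` with `μ` uniform on `{-1,1}` is smooth, satisfies
`V''(ψ) = c - c²(1 - tanh(cψ)²) ≥ c - c² > 0`, and `V(ψ) - (c - c²)ψ²/2` is convex. -/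
theorem ising_renormalised_potential_convexity
    (c : ℝ) (hc : 0 < c) (hc1 : c < 1) (V : ℝ → ℝ)
    (hV : ∀ ψ : ℝ, V ψ =
      -Real.log ((Real.exp (-(c * (ψ - 1) ^ 2) / 2)
        + Real.exp (-(c * (ψ + 1) ^ 2) / 2)) / 2)) :
    ContDiff ℝ (⊤ : ℕ∞) V ∧
    (∀ ψ : ℝ, deriv (deriv V) ψ = c - c ^ 2 * (1 - Real.tanh (c * ψ) ^ 2)) ∧
    (∀ ψ : ℝ, c - c ^ 2 ≤ deriv (deriv V) ψ) ∧
    (0 < c - c ^ 2) ∧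
    ConvexOn ℝ Set.univ (fun ψ => V ψ - (c - c ^ 2) * ψ ^ 2 / 2) := by
  have hVfun : V = fun x => c * (x ^ 2 + 1) / 2 - Real.log (Real.cosh (c * x)) := by
    funext x
    rw [hV, neg_log_gaussian_average]
  have hsq : ∀ x : ℝ, HasDerivAt (fun y : ℝ => y ^ 2) (2 * x) x := fun x => by
    simpa using hasDerivAt_pow 2 x
  have hd1 : ∀ x, HasDerivAt V (c * x - c * Real.tanh (c * x)) x := fun x => by
    rw [hVfun]
    refine (((((hsq x).add_const 1).const_mul c).div_const 2).sub
      (hasDerivAt_log_cosh_mul c x)).congr_deriv ?_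
    ring
  have hderiv : deriv V = fun x => c * x - c * Real.tanh (c * x) :=
    funext fun x => (hd1 x).deriv
  have hd2 : ∀ x, HasDerivAt (fun y => c * y - c * Real.tanh (c * y))
      (c - c ^ 2 * (1 - Real.tanh (c * x) ^ 2)) x := fun x => by
    refine (((hasDerivAt_id x).const_mul c).sub ((hasDerivAt_tanh_mul c x).const_mul c)).congr_deriv ?_
    ring
  have hderiv2 : ∀ x, deriv (deriv V) x = c - c ^ 2 * (1 - Real.tanh (c * x) ^ 2) := fun x => by
    rw [hderiv]
    exact (hd2 x).deriv
  refine ⟨?_, hderiv2, fun x => ?_, by nlinarith, ?_⟩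
  · rw [hVfun]
    refine ContDiff.sub (by fun_prop) (ContDiff.log ?_ fun x => (Real.cosh_pos _).ne')
    exact Real.contDiff_cosh.comp (contDiff_const.mul contDiff_id)
  · rw [hderiv2]
    nlinarith [sq_nonneg (c * Real.tanh (c * x))]
  · have hW1 : ∀ x, HasDerivAt (fun y => V y - (c - c ^ 2) * y ^ 2 / 2)
        (c * x - c * Real.tanh (c * x) - (c - c ^ 2) * x) x := fun x => by
      refine ((hd1 x).sub (((hsq x).const_mul (c - c ^ 2)).div_const 2)).congr_deriv ?_
      ring
    have hW2 : ∀ x, HasDerivAt (fun y => c * y - c * Real.tanh (c * y) - (c - c ^ 2) * y)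
        (c ^ 2 * Real.tanh (c * x) ^ 2) x := fun x => by
      refine ((hd2 x).sub ((hasDerivAt_id x).const_mul (c - c ^ 2))).congr_deriv ?_
      ring
    exact convexOn_of_hasDerivWithinAt2_nonneg convex_univ
      (fun x _ => (hW1 x).continuousAt.continuousWithinAt)
      (fun x _ => (hW1 x).hasDerivWithinAt) (fun x _ => (hW2 x).hasDerivWithinAt)
      (fun x _ => by positivity)
end

section
/- Let p ∈ (0, 1) and let μ be the probability measure on {−1, 1} with μ({1}) = p. Then for every f : {−1,1} → ℝ, Ent_μ(f²) ≤ (1/2)(f(1) − f(−1))². -/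
/-!
By convexity of `t ↦ t log t`, for any `m > 0` the entropy is at most
`p (x log (x/m) - x + m) + (1-p) (y log (y/m) - y + m)` with `x = f(1)²`, `y = f(-1)²`.
So it is enough to find one `m`, independent of `p`, for which both brackets are at most
`(a - b)² / 2`, where `a = f(1)`, `b = f(-1)`. The choice `m = (a² + ab + b²)/3` works.
For the first bracket, dividing by `a²` and putting `u = b/a` leaves the one-variable inequality
`h(u) = (1-u)²/2 + 1 - (1+u+u²)/3 + log ((1+u+u²)/3) ≥ 0`, which holds because `h(1) = 0` and
`h'(u) = (u-1)³ / (3(1+u+u²))`; the second bracket is the same with `a` and `b` exchanged.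
-/

namespace TwoPointLSI

/-- The defect in the one-variable inequality to which the logarithmic Sobolev inequality
reduces. -/
noncomputable def defect (u : ℝ) : ℝ :=
  (1 - u) ^ 2 / 2 + 1 - (1 + u + u ^ 2) / 3 + Real.log ((1 + u + u ^ 2) / 3)

lemma hasDerivAt_defect (u : ℝ) :
    HasDerivAt defect ((u - 1) ^ 3 / (3 * (1 + u + u ^ 2))) u := by
  have hq : 0 < 1 + u + u ^ 2 := by nlinarith [sq_nonneg (2 * u + 1)]
  have h1 : HasDerivAt (fun u : ℝ => (1 + u + u ^ 2) / 3) ((1 + 2 * u) / 3) u := by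
    have h := (((hasDerivAt_id u).const_add 1).add ((hasDerivAt_id u).pow 2)).div_const 3
    exact h.congr_deriv (by simp)
  have h2 : HasDerivAt (fun u : ℝ => (1 - u) ^ 2 / 2) (-(1 - u)) u := by
    have h := (((hasDerivAt_id u).const_sub 1).pow 2).div_const 2
    exact h.congr_deriv (by simp; ring)
  have h := ((h2.add_const 1).sub h1).add (h1.log (by positivity))
  refine h.congr_deriv ?_
  field_simp
  ring

lemma defect_nonneg (u : ℝ) : 0 ≤ defect u := by
  have h1 : defect 1 = 0 := by norm_num [defect]
  have hc : Continuous defect :=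
    continuous_iff_continuousAt.2 fun u => (hasDerivAt_defect u).continuousAt
  have hq : ∀ v : ℝ, 0 < 3 * (1 + v + v ^ 2) := fun v => by nlinarith [sq_nonneg (2 * v + 1)]
  rw [← h1]
  rcases le_total u 1 with hu | hu
  · have hanti : AntitoneOn defect (Set.Iic 1) := by
      refine antitoneOn_of_deriv_nonpos (convex_Iic 1) hc.continuousOn
        (fun v _ => (hasDerivAt_defect v).differentiableAt.differentiableWithinAt) fun v hv => ?_
      rw [interior_Iic, Set.mem_Iio] at hv
      rw [(hasDerivAt_defect v).deriv]
      refine div_nonpos_of_nonpos_of_nonneg ?_ (hq v).le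
      exact (Odd.pow_neg (by decide) (by linarith)).le
    exact hanti hu Set.self_mem_Iic hu
  · have hmono : MonotoneOn defect (Set.Ici 1) := by
      refine monotoneOn_of_deriv_nonneg (convex_Ici 1) hc.continuousOn
        (fun v _ => (hasDerivAt_defect v).differentiableAt.differentiableWithinAt) fun v hv => ?_
      rw [interior_Ici, Set.mem_Ioi] at hv
      rw [(hasDerivAt_defect v).deriv]
      exact div_nonneg (pow_nonneg (by linarith) 3) (hq v).le
    exact hmono Set.self_mem_Ici hu hu

/-- The homogeneous form of `defect_nonneg`, at `u = b / a`. -/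
lemma bracket_le (a b : ℝ) :
    a ^ 2 * Real.log (a ^ 2) - a ^ 2 * Real.log ((a ^ 2 + a * b + b ^ 2) / 3)
      - a ^ 2 + (a ^ 2 + a * b + b ^ 2) / 3 ≤ (1 / 2) * (a - b) ^ 2 := by
  rcases eq_or_ne a 0 with rfl | ha
  · nlinarith [sq_nonneg b]
  have ha2 : 0 < a ^ 2 := by positivity
  have hq : 0 < 1 + b / a + (b / a) ^ 2 := by nlinarith [sq_nonneg (2 * (b / a) + 1)]
  have hm : (a ^ 2 + a * b + b ^ 2) / 3 = a ^ 2 * ((1 + b / a + (b / a) ^ 2) / 3) := by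
    field_simp
  have h := mul_nonneg ha2.le (defect_nonneg (b / a))
  have hb : (1 / 2) * (a - b) ^ 2 = a ^ 2 * ((1 - b / a) ^ 2 / 2) := by
    field_simp
  rw [hb, hm, Real.log_mul ha2.ne' (by positivity)]
  unfold defect at h
  linarith

/-- The tangent line bound for `t ↦ t log t` at `m`. -/
lemma tangent_le {M m : ℝ} (hM : 0 < M) (hm : 0 < m) :
    M * Real.log m + M - m ≤ M * Real.log M := by
  have h := Real.log_le_sub_one_of_pos (div_pos hm hM)
  rw [Real.log_div hm.ne' hM.ne'] at h
  have h' := mul_le_mul_of_nonneg_left h hM.le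
  have e : M * (m / M - 1) = m - M := by field_simp
  linarith

end TwoPointLSI

/-- The two-point measure on `{-1, 1}` giving mass `p` to `1` satisfies a logarithmic
Sobolev inequality with constant `2/γ = 1/2`, uniformly in `p ∈ (0,1)`:
`Ent_μ(f²) ≤ (1/2) (f 1 - f (-1))²`.  Here the entropy of `f²` with respect to the
two-point measure is written out explicitly (with the convention `0 * log 0 = 0`,
which is automatic since `Real.log 0 = 0`). -/
theorem two_point_measure_LSI
    (p : ℝ) (hp : p ∈ Set.Ioo (0 : ℝ) 1) (f : ℝ → ℝ) :
    p * (f 1) ^ 2 * Real.log ((f 1) ^ 2)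
      + (1 - p) * (f (-1)) ^ 2 * Real.log ((f (-1)) ^ 2)
      - (p * (f 1) ^ 2 + (1 - p) * (f (-1)) ^ 2)
          * Real.log (p * (f 1) ^ 2 + (1 - p) * (f (-1)) ^ 2)
    ≤ (1 / 2) * (f 1 - f (-1)) ^ 2 := by
  obtain ⟨hp0, hp1⟩ := hp
  generalize f 1 = a
  generalize f (-1) = b
  by_cases h0 : a = 0 ∧ b = 0
  · obtain ⟨rfl, rfl⟩ := h0
    simp
  have hq0 : 0 < 1 - p := by linarith
  have hM : 0 < p * a ^ 2 + (1 - p) * b ^ 2 := by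
    rcases not_and_or.1 h0 with h | h <;> positivity
  have hm : 0 < (a ^ 2 + a * b + b ^ 2) / 3 := by
    rcases not_and_or.1 h0 with h | h
    · have : 0 < a ^ 2 := by positivity
      nlinarith [sq_nonneg (a + 2 * b)]
    · have : 0 < b ^ 2 := by positivity
      nlinarith [sq_nonneg (2 * a + b)]
  have ht := TwoPointLSI.tangent_le hM hm
  have ha := mul_le_mul_of_nonneg_left (TwoPointLSI.bracket_le a b) hp0.le
  have hb := mul_le_mul_of_nonneg_left (TwoPointLSI.bracket_le b a) hq0.le
  have e : b ^ 2 + b * a + a ^ 2 = a ^ 2 + a * b + b ^ 2 := by ring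
  rw [e] at hb
  linarith
end

section
/- Let Λ be a nonempty finite set and c > 0. For ψ ∈ ℝ let μ_ψ be the probability measure on {−1,1} with μ_ψ({σ}) proportional to e^{−c(ψ−σ)²/2}, and for φ ∈ ℝ^Λ let μ_φ = ⊗_{x∈Λ} μ_{φ_x} on {−1,1}^Λ. Let F : {−1,1}^Λ → ℝ with μ_φ(F²) > 0, and set G(φ) = (μ_φ(F²))^{1/2}. Then for each x ∈ Λ, |∂_{φ_x} G(φ)|² ≤ (c²/2) μ_φ((F(σ) − F(σ^x))²), where σ^x denotes σ with the spin at x negated and ∂_{φ_x} is the partial derivative in φ_x. -/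
/-!
Write `σˣ` for `σ` flipped at `x`, `p, q` for the two weights of the single-spin measure at `x`, and
`w(σ)` for the product of the weights away from `x`, which does not depend on the spin at `x`.
Since `p` and `q` have derivatives `2cpq` and `-2cpq`, the quantity `S = μ_φ(F²)` has
derivative `2c ∑ w p q σ_x F(σ)²`.
Symmetrizing under the flip turns this into `c ∑ w p q σ_x (F(σ) - F(σˣ)) (F(σ) + F(σˣ))`,
and Cauchy–Schwarz bounds its square by
`c² (∑ w p q (F(σ) - F(σˣ))²) (∑ w p q (F(σ) + F(σˣ))²)`.
The second factor is at most `4 S` by `(a + b)² ≤ 2 a² + 2 b²` and `p q ≤ p`. The first factor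
is at most half of `μ_φ((F(σ) - F(σˣ))²)`, by `p q ≤ (p + q) / 4`: this is the spectral gap of the
two-point measure. Dividing by `(2 √S)² = 4 S` gives the claim.
-/

open Real

/-- The single-spin weight of the spin value `s` has derivative `2 c s p q` in the field, with
`p, q` the weights of `1` and `-1`. -/
lemma hasDerivAt_singleSpin (c t s : ℝ) (hs : s = 1 ∨ s = -1) :
    HasDerivAt (fun ψ : ℝ => Real.exp (-(c * (ψ - s) ^ 2) / 2) /
      (Real.exp (-(c * (ψ - 1) ^ 2) / 2) + Real.exp (-(c * (ψ + 1) ^ 2) / 2)))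
      (2 * c * s * (Real.exp (-(c * (t - 1) ^ 2) / 2) * Real.exp (-(c * (t + 1) ^ 2) / 2)) /
      (Real.exp (-(c * (t - 1) ^ 2) / 2) + Real.exp (-(c * (t + 1) ^ 2) / 2)) ^ 2) t := by
  have key : ∀ r : ℝ, HasDerivAt (fun ψ : ℝ => Real.exp (-(c * (ψ - r) ^ 2) / 2))
      (Real.exp (-(c * (t - r) ^ 2) / 2) * (-(c * (t - r)))) t := by
    intro r
    have h := ((((hasDerivAt_id t).sub_const r).pow 2).const_mul c).neg.div_const 2
    refine h.exp.congr_deriv ?_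
    simp
    ring
  have h1 := key 1
  have h2 := key (-1)
  simp only [sub_neg_eq_add] at h2
  have hA := Real.exp_pos (-(c * (t - 1) ^ 2) / 2)
  have hB := Real.exp_pos (-(c * (t + 1) ^ 2) / 2)
  refine ((key s).div (h1.add h2) (by simp only [Pi.add_apply]; positivity)).congr_deriv ?_
  simp only [Pi.add_apply]
  rcases hs with rfl | rfl
  · congr 1
    ring
  · simp only [sub_neg_eq_add]
    congr 1
    ring

/-- The Cauchy–Schwarz and symmetrization argument for an abstract flip `T`: `m` is the measure,
`a` stands for `w p q` and `e` for the spin at the flipped site. -/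
lemma sq_sum_flip_le {ι : Type*} [Fintype ι] (T : ι → ι) (hT : Function.Involutive T)
    (m a e F : ι → ℝ) (ha : ∀ i, 0 ≤ a i) (haT : ∀ i, a (T i) = a i) (ham : ∀ i, a i ≤ m i)
    (hgap : ∀ i, a i ≤ (m i + m (T i)) / 4) (he : ∀ i, e i ^ 2 = 1) (heT : ∀ i, e (T i) = -e i) :
    (∑ i, 2 * (a i * e i * F i ^ 2)) ^ 2 ≤
      2 * (∑ i, m i * F i ^ 2) * ∑ i, m i * (F i - F (T i)) ^ 2 := by
  have hsum : ∀ f : ι → ℝ, ∑ i, f (T i) = ∑ i, f i := fun f =>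
    Equiv.sum_comp hT.toPerm f
  have hsymm : ∑ i, 2 * (a i * e i * F i ^ 2) =
      ∑ i, (a i * (F i - F (T i))) * (e i * (F i + F (T i))) := by
    have h := hsum (fun i => a i * e i * F i ^ 2)
    simp only [haT, heT] at h
    rw [← Finset.mul_sum, two_mul]
    nth_rewrite 2 [← h]
    rw [← Finset.sum_add_distrib]
    exact Finset.sum_congr rfl fun i _ => by ring
  have hcs : (∑ i, (a i * (F i - F (T i))) * (e i * (F i + F (T i)))) ^ 2 ≤
      (∑ i, a i * (F i - F (T i)) ^ 2) * ∑ i, a i * (F i + F (T i)) ^ 2 := by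
    refine Finset.sum_sq_le_sum_mul_sum_of_sq_le_mul _
      (fun i _ => mul_nonneg (ha i) (sq_nonneg _))
      (fun i _ => mul_nonneg (ha i) (sq_nonneg _)) fun i _ => le_of_eq ?_
    linear_combination (a i ^ 2 * (F i - F (T i)) ^ 2 * (F i + F (T i)) ^ 2) * he i
  have hplus : ∑ i, a i * (F i + F (T i)) ^ 2 ≤ 4 * ∑ i, m i * F i ^ 2 := by
    have h := hsum (fun i => a i * F i ^ 2)
    simp only [haT] at h
    calc ∑ i, a i * (F i + F (T i)) ^ 2
        ≤ ∑ i, (2 * (a i * F i ^ 2) + 2 * (a i * F (T i) ^ 2)) :=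
          Finset.sum_le_sum fun i _ => by
            nlinarith [mul_nonneg (ha i) (sq_nonneg (F i - F (T i)))]
      _ = 4 * ∑ i, a i * F i ^ 2 := by
          rw [Finset.sum_add_distrib, ← Finset.mul_sum, ← Finset.mul_sum, h]
          ring
      _ ≤ 4 * ∑ i, m i * F i ^ 2 := by
          gcongr with i
          exact ham i
  have hminus : ∑ i, a i * (F i - F (T i)) ^ 2 ≤ (∑ i, m i * (F i - F (T i)) ^ 2) / 2 := by
    have h := hsum (fun i => m i * (F i - F (T i)) ^ 2)
    simp only [hT _] at h
    calc ∑ i, a i * (F i - F (T i)) ^ 2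
        ≤ ∑ i, (m i + m (T i)) / 4 * (F i - F (T i)) ^ 2 := by
          gcongr with i
          exact hgap i
      _ = (∑ i, m i * (F i - F (T i)) ^ 2 + ∑ i, m (T i) * (F (T i) - F i) ^ 2) / 4 := by
          rw [← Finset.sum_add_distrib, Finset.sum_div]
          exact Finset.sum_congr rfl fun i _ => by ring
      _ = (∑ i, m i * (F i - F (T i)) ^ 2) / 2 := by
          rw [h]
          ring
  rw [hsymm]
  refine hcs.trans ((mul_le_mul hminus hplus
    (Finset.sum_nonneg fun i _ => mul_nonneg (ha i) (sq_nonneg _))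
    (div_nonneg (Finset.sum_nonneg fun i _ =>
      mul_nonneg ((ha i).trans (ham i)) (sq_nonneg _)) (by norm_num))).trans_eq (by ring))

/-- Final gradient estimate in the Ising case: with tilted single-spin measures
`μ_ψ({σ}) ∝ e^{-c(ψ-σ)²/2}` on `{-1,1}`, the product measure `μ_φ = ⊗_x μ_{φ_x}`, and
`G(φ) = (μ_φ(F²))^{1/2}` for `F` with `μ_φ(F²) > 0`, one has
`|∂_{φ_x} G(φ)|² ≤ (c²/2) μ_φ((F(σ) - F(σˣ))²)`.
Configurations are encoded as `σ : Λ → Bool` with `spin b = if b then 1 else -1`. -/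
theorem ising_gradient_estimate
    (Λ : Type*) [Fintype Λ] [DecidableEq Λ] [Nonempty Λ]
    (c : ℝ) (hc : 0 < c)
    (spin : Bool → ℝ) (hspin : spin = fun b => if b then 1 else -1)
    (p : ℝ → Bool → ℝ)
    (hp : ∀ ψ b, p ψ b = Real.exp (-(c * (ψ - spin b) ^ 2) / 2) /
      (Real.exp (-(c * (ψ - 1) ^ 2) / 2) + Real.exp (-(c * (ψ + 1) ^ 2) / 2)))
    (μφ : (Λ → ℝ) → (Λ → Bool) → ℝ)
    (hμφ : ∀ φ σ, μφ φ σ = ∏ x : Λ, p (φ x) (σ x))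
    (F : (Λ → Bool) → ℝ)
    (G : (Λ → ℝ) → ℝ)
    (hG : ∀ φ, G φ = Real.sqrt (∑ σ : Λ → Bool, μφ φ σ * (F σ) ^ 2))
    (x : Λ) (φ : Λ → ℝ)
    (hFpos : 0 < ∑ σ : Λ → Bool, μφ φ σ * (F σ) ^ 2) :
    DifferentiableAt ℝ (fun t => G (Function.update φ x t)) (φ x) ∧
    (deriv (fun t => G (Function.update φ x t)) (φ x)) ^ 2
      ≤ (c ^ 2 / 2) * ∑ σ : Λ → Bool,
          μφ φ σ * (F σ - F (Function.update σ x (!(σ x)))) ^ 2 := by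
  have hs : ∀ b, spin b = 1 ∨ spin b = -1 := by
    intro b
    cases b <;> simp [hspin]
  have hp0 : ∀ ψ b, 0 ≤ p ψ b := fun ψ b => by
    rw [hp]
    positivity
  have hp1 : ∀ ψ b, p ψ b + p ψ (!b) = 1 := by
    intro ψ b
    have hA := Real.exp_pos (-(c * (ψ - 1) ^ 2) / 2)
    have hB := Real.exp_pos (-(c * (ψ + 1) ^ 2) / 2)
    rw [hp, hp, ← add_div, div_eq_one_iff_eq (by positivity)]
    cases b <;> simp [hspin, add_comm]
  have hpd : ∀ t b, HasDerivAt (fun ψ => p ψ b) (2 * c * spin b * (p t b * p t (!b))) t := by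
    intro t b
    have h := hasDerivAt_singleSpin c t (spin b) (hs b)
    simp only [← hp] at h
    refine h.congr_deriv ?_
    rw [hp, hp, div_mul_div_comm, ← sq, ← mul_div_assoc]
    congr 1
    cases b <;> simp only [hspin, Bool.not_true, Bool.not_false, if_true, Bool.false_eq_true,
      if_false, sub_neg_eq_add] <;> ring
  set w : (Λ → Bool) → ℝ := fun σ => ∏ y ∈ Finset.univ.erase x, p (φ y) (σ y) with hw
  have hw0 : ∀ σ, 0 ≤ w σ := fun σ => Finset.prod_nonneg fun y _ => hp0 _ _
  have hμ : ∀ t σ, μφ (Function.update φ x t) σ = p t (σ x) * w σ := by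
    intro t σ
    rw [hμφ, ← Finset.mul_prod_erase _ _ (Finset.mem_univ x), Function.update_self]
    congr 1
    refine Finset.prod_congr rfl fun y hy => ?_
    rw [Function.update_of_ne (Finset.ne_of_mem_erase hy)]
  have hμ' : ∀ σ, μφ φ σ = p (φ x) (σ x) * w σ := by
    intro σ
    rw [← hμ, Function.update_eq_self]
  have hwT : ∀ σ b, w (Function.update σ x b) = w σ := by
    intro σ b
    refine Finset.prod_congr rfl fun y hy => ?_
    rw [Function.update_of_ne (Finset.ne_of_mem_erase hy)]
  set S := ∑ σ : Λ → Bool, μφ φ σ * (F σ) ^ 2 with hS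
  set D := ∑ σ : Λ → Bool,
    2 * ((p (φ x) (σ x) * p (φ x) (!(σ x)) * w σ) * spin (σ x) * F σ ^ 2) with hD
  have hSd : HasDerivAt (fun t => ∑ σ : Λ → Bool, μφ (Function.update φ x t) σ * (F σ) ^ 2)
      (c * D) (φ x) := by
    simp only [hμ]
    rw [hD, Finset.mul_sum]
    refine HasDerivAt.fun_sum fun σ _ => ?_
    refine (((hpd (φ x) (σ x)).mul_const (w σ)).mul_const (F σ ^ 2)).congr_deriv ?_
    ring
  have hGd : HasDerivAt (fun t => G (Function.update φ x t)) (c * D / (2 * √S)) (φ x) := by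
    simp only [hG]
    have h := hSd.sqrt (by rw [Function.update_eq_self]; exact hFpos.ne')
    rwa [Function.update_eq_self] at h
  refine ⟨hGd.differentiableAt, ?_⟩
  have hmain : D ^ 2 ≤ 2 * S * ∑ σ : Λ → Bool,
      μφ φ σ * (F σ - F (Function.update σ x (!(σ x)))) ^ 2 := by
    refine sq_sum_flip_le (fun σ => Function.update σ x (!(σ x))) (fun σ => by simp)
      (μφ φ) (fun σ => p (φ x) (σ x) * p (φ x) (!(σ x)) * w σ) (fun σ => spin (σ x)) F
      (fun σ => mul_nonneg (mul_nonneg (hp0 _ _) (hp0 _ _)) (hw0 σ)) ?_ ?_ ?_ ?_ ?_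
    · intro σ
      simp only [Function.update_self, hwT, Bool.not_not]
      ring
    · intro σ
      rw [hμ']
      refine mul_le_mul_of_nonneg_right ?_ (hw0 σ)
      exact mul_le_of_le_one_right (hp0 _ _) (by linarith [hp1 (φ x) (σ x), hp0 (φ x) (σ x)])
    · intro σ
      simp only [hμ', hwT, Function.update_self]
      rw [← add_mul, hp1, one_mul]
      -- `pq ≤ 1/4` because `p + q = 1`
      have h4 : p (φ x) (σ x) * p (φ x) (!(σ x)) ≤ 1 / 4 := by
        have h := hp1 (φ x) (σ x)
        have h' : p (φ x) (!(σ x)) = 1 - p (φ x) (σ x) := by linarith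
        rw [h']
        nlinarith [sq_nonneg (p (φ x) (σ x) - 1 / 2)]
      linarith [mul_le_mul_of_nonneg_right h4 (hw0 σ)]
    · intro σ
      rcases hs (σ x) with h | h <;> simp [h]
    · intro σ
      simp only [Function.update_self, hspin]
      cases σ x <;> simp
  rw [hGd.deriv, div_pow, mul_pow, mul_pow, Real.sq_sqrt hFpos.le, div_le_iff₀ (by positivity)]
  linarith [mul_le_mul_of_nonneg_left hmain (sq_nonneg c)]
end

section
/- Let (X, 𝒜, ρ) be a probability space, let Y be a measurable space, and let φ ↦ κ_φ be a Markov kernel from X to Y. Define the mixture probability measure ν on Y by ν(A) = ∫ κ_φ(A) dρ(φ). Let F : Y → ℝ be measurable with F² ν-integrable and F² log(F²) ν-integrable. Then Ent_ν(F²) = ∫ Ent_{κ_φ}(F²) dρ(φ) + Ent_ρ(G²), where G(φ) = (∫ F² dκ_φ)^{1/2}. -/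
/-!
Disintegrating along `ν = κ ∘ₘ ρ` gives `∫ h dν = ∫ (∫ h dκ_φ) dρ(φ)` for `ν`-integrable `h`. With
`g φ = ∫ F² dκ_φ = G φ ^ 2`, applying this to `F²` and to `F² log F²` makes the terms
`∫ g log g dρ` on the right-hand side cancel. Splitting the integral of the conditional entropies
requires `g log g` to be `ρ`-integrable: it is bounded below by `-1` on `[0, ∞)`, and above, by
Jensen's inequality for the convex function `x log x`, by `∫ F² log F² dκ_φ`.
-/

open MeasureTheory ProbabilityTheory Real

/-- Entropy of a nonnegative function `f` with respect to a measure `m`: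
`Ent_m(f) = ∫ f log f dm - (∫ f dm) log (∫ f dm)` (with `0 log 0 = 0`, automatic since
`Real.log 0 = 0`). -/
noncomputable def ent {X : Type*} [MeasurableSpace X]
    (m : MeasureTheory.Measure X) (f : X → ℝ) : ℝ :=
  (∫ x, f x * Real.log (f x) ∂m) - (∫ x, f x ∂m) * Real.log (∫ x, f x ∂m)

lemma integrable_integral_kernel {X Y : Type*} [MeasurableSpace X] [MeasurableSpace Y]
    {ρ : Measure X} {κ : Kernel X Y} {f : Y → ℝ} (hf : Integrable f (ρ.bind κ)) :
    Integrable (fun φ => ∫ y, f y ∂(κ φ)) ρ := by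
  rw [Measure.comp_eq_comp_const_apply] at hf
  simpa using hf.integral_comp

lemma integral_bind_kernel {X Y : Type*} [MeasurableSpace X] [MeasurableSpace Y]
    {ρ : Measure X} {κ : Kernel X Y} {f : Y → ℝ} (hf : Integrable f (ρ.bind κ)) :
    ∫ y, f y ∂(ρ.bind κ) = ∫ φ, ∫ y, f y ∂(κ φ) ∂ρ := by
  rw [Measure.comp_eq_comp_const_apply] at hf ⊢
  simpa using Kernel.integral_comp hf

/-- Integrating out a Markov kernel preserves integrability of `f log f`: Jensen's inequality bounds
`g log g` from above, where `g φ = ∫ f dκ_φ`, and `x log x ≥ -1` bounds it from below. -/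
lemma integrable_mul_log_integral_kernel {X Y : Type*} [MeasurableSpace X] [MeasurableSpace Y]
    {ρ : Measure X} [IsFiniteMeasure ρ] {κ : Kernel X Y} [IsMarkovKernel κ] {f : Y → ℝ}
    (hf0 : ∀ y, 0 ≤ f y) (hf : Integrable f (ρ.bind κ))
    (hflog : Integrable (fun y => f y * Real.log (f y)) (ρ.bind κ)) :
    Integrable (fun φ => (∫ y, f y ∂(κ φ)) * Real.log (∫ y, f y ∂(κ φ))) ρ := by
  have hg : Integrable (fun φ => ∫ y, f y ∂(κ φ)) ρ :=
    integrable_integral_kernel hf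
  have hglog : Integrable (fun φ => ∫ y, f y * Real.log (f y) ∂(κ φ)) ρ :=
    integrable_integral_kernel hflog
  refine Integrable.mono' (hglog.norm.add (integrable_const (1 : ℝ)))
    (Real.continuous_mul_log.comp_aestronglyMeasurable hg.1) ?_
  filter_upwards [((Measure.integrable_comp_iff hf.1).1 hf).1,
    ((Measure.integrable_comp_iff hflog.1).1 hflog).1] with φ h1 h2
  have hJensen := Real.convexOn_mul_log.map_integral_le Real.continuous_mul_log.continuousOn
    isClosed_Ici (ae_of_all (κ φ) hf0) h1 h2
  have hg0 : 0 ≤ ∫ y, f y ∂(κ φ) := integral_nonneg hf0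
  have hlow := Real.self_sub_one_le_mul_log hg0
  simp only [Pi.add_apply, Real.norm_eq_abs]
  refine abs_le.2 ⟨?_, ?_⟩
  · linarith [abs_nonneg (∫ y, f y * Real.log (f y) ∂(κ φ))]
  · linarith [le_abs_self (∫ y, f y * Real.log (f y) ∂(κ φ))]

/-- Two-scale entropy decomposition: if `ν = ∫ κ_φ dρ(φ)` is a mixture of a Markov
kernel `κ` over a probability measure `ρ`, then for `F` with `F²` and `F² log F²`
`ν`-integrable, `Ent_ν(F²) = ∫ Ent_{κ_φ}(F²) dρ(φ) + Ent_ρ(G²)` where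
`G(φ) = (∫ F² dκ_φ)^{1/2}`. -/
theorem entropy_decomposition
    {X Y : Type*} [MeasurableSpace X] [MeasurableSpace Y]
    (ρ : MeasureTheory.Measure X) [IsProbabilityMeasure ρ]
    (κ : ProbabilityTheory.Kernel X Y) [IsMarkovKernel κ]
    (ν : MeasureTheory.Measure Y) (hν : ν = ρ.bind (fun φ => κ φ))
    (F : Y → ℝ) (hFmeas : Measurable F)
    (hFint : Integrable (fun y => (F y) ^ 2) ν)
    (hFlogint : Integrable (fun y => (F y) ^ 2 * Real.log ((F y) ^ 2)) ν)
    (G : X → ℝ) (hG : ∀ φ, G φ = Real.sqrt (∫ y, (F y) ^ 2 ∂(κ φ))) :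
    ent ν (fun y => (F y) ^ 2)
      = (∫ φ, ent (κ φ) (fun y => (F y) ^ 2) ∂ρ)
        + ent ρ (fun φ => (G φ) ^ 2) := by
  subst hν
  have hG2 : ∀ φ, (G φ) ^ 2 = ∫ y, (F y) ^ 2 ∂(κ φ) := fun φ => by
    rw [hG, Real.sq_sqrt (integral_nonneg fun y => sq_nonneg (F y))]
  have hglog := integrable_mul_log_integral_kernel (fun y => sq_nonneg (F y)) hFint hFlogint
  simp only [ent, hG2]
  rw [integral_sub (integrable_integral_kernel hFlogint) hglog, integral_bind_kernel hFint,
    integral_bind_kernel hFlogint]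
  ring
end

section
/- Let Λ be a nonempty finite set and let M be a symmetric positive definite real Λ×Λ matrix whose largest eigenvalue ‖M‖ satisfies ‖M‖ < 1. Let ν be the probability measure on {−1,1}^Λ with ν({σ}) = Z^{−1} exp(−(1/2) Σ_{x,y∈Λ} M_{xy} σ_x σ_y). Then there is a constant C < ∞ depending only on ‖M‖ (and not on the set Λ or on M otherwise) such that for every F : {−1,1}^Λ → ℝ, Var_ν(F) ≤ C Σ_{x∈Λ} ν((F(σ) − F(σ^x))²), where σ^x denotes σ with the spin at x negated. -/
open Matrix Real

/-!
Write `r I - M = Aᵀ A`. Since `σ_x² = 1`, the Gibbs weight is, up to a constant factor,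
`exp (½ Σ_i (w_i · σ)²)`, where the `w_i` are the rows of `A`. This measure is the end point
`s = 1`, `h = 0` of the family `μ_{s,h} ∝ exp (½ s Σ_i (w_i · σ)² + h · σ)`, which for `s = 0`
consists of product measures. Put `L = Σ_i (½ ∂_{w_i}² + ⟨w_i · σ⟩ ∂_{w_i})`, acting on functions
of the external field `h`. The partition function solves a heat equation in `(s, h)`, so that
`∂_s ⟨F⟩ = L ⟨F⟩` and `∂_s Var F = L Var F + Σ_i Cov (F, w_i · σ)²`.

Let `D F = Σ_x (F(σ) - F(σˣ))²`. At `s = 0` the Efron–Stein argument gives `Var F ≤ ¼ ⟨D F⟩`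
(`product_poincare`). The claim is that `Ψ = (1 - r s) Var F - ¼ ⟨D F⟩` stays nonpositive for
`0 ≤ s ≤ 1`. If `Var (u · σ) ≤ l |u|²` for all `u`, then `Σ_i Cov (F, w_i · σ)² ≤ r l Var F`
(`sum_Cv_sq_le`), hence `∂_s Ψ - L Ψ ≤ r (l (1 - r s) - 1) Var F`, and the maximum principle on
`[0, 1] × ℝ^Λ` (`max_principle`) finishes the proof once `l = 1 / (1 - r s)` is allowed.
That covariance bound (`linear_variance`) is the same claim for the functions `F = u · σ`,
`|u| = 1`, with `⟨D F⟩ = 4`. For these the maximum is taken over `u` as well: at a maximizing `u`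
one may use `l = Var (u · σ)`, and then `∂_s Ψ - L Ψ ≤ r l Ψ`, which the maximum principle
tolerates because `l` is bounded. The resulting constant is `C = 1 / (4 (1 - r))`.
-/

namespace IsingGap

noncomputable section

/-! ### Spins and flips -/

/-- The real spin `±1` encoded by a Boolean. -/
def sp (b : Bool) : ℝ := if b then 1 else -1

lemma sp_sq (b : Bool) : sp b ^ 2 = 1 := by cases b <;> simp [sp]

lemma sp_not (b : Bool) : sp (!b) = - sp b := by cases b <;> simp [sp]

section
variable {Λ : Type} [DecidableEq Λ]

/-- The configuration `σˣ`: `σ` with the spin at `x` negated. -/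
def flip (x : Λ) (σ : Λ → Bool) : Λ → Bool := Function.update σ x (!(σ x))

lemma flip_flip (x : Λ) (σ : Λ → Bool) : flip x (flip x σ) = σ := by
  simp [flip]

lemma flip_comm (x y : Λ) (σ : Λ → Bool) : flip x (flip y σ) = flip y (flip x σ) := by
  by_cases h : x = y
  · rw [h]
  · ext z
    simp only [flip, Function.update_apply]
    grind

end

section
variable {Λ : Type} [Fintype Λ]

/-! ### The interpolating Gibbs measures -/

/-- The linear observable `v · σ = Σ_x v_x σ_x`. -/
def lin (v : Λ → ℝ) (σ : Λ → Bool) : ℝ := ∑ x, v x * sp (σ x)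

lemma lin_add_smul (h v : Λ → ℝ) (t : ℝ) (σ : Λ → Bool) :
    lin (h + t • v) σ = lin h σ + t * lin v σ := by
  simp only [lin, Pi.add_apply, Pi.smul_apply, smul_eq_mul, Finset.mul_sum, ← Finset.sum_add_distrib]
  exact Finset.sum_congr rfl fun x _ => by ring

lemma lin_smul (c : ℝ) (v : Λ → ℝ) : lin (c • v) = c • lin v := by
  ext σ
  simp only [lin, Pi.smul_apply, smul_eq_mul, Finset.mul_sum]
  exact Finset.sum_congr rfl fun x _ => by ring

lemma lin_sq_le (v : Λ → ℝ) (σ : Λ → Bool) :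
    lin v σ ^ 2 ≤ (∑ x, v x ^ 2) * Fintype.card Λ := by
  have := Finset.sum_mul_sq_le_sq_mul_sq Finset.univ v (fun x => sp (σ x))
  simpa [sp_sq, lin] using this

/-- The unnormalised weight `exp (½ s Σ_i (w_i · σ)² + h · σ)`. -/
def wt (w : Λ → Λ → ℝ) (s : ℝ) (h : Λ → ℝ) (σ : Λ → Bool) : ℝ :=
  Real.exp (s / 2 * ∑ i, lin (w i) σ ^ 2 + lin h σ)

lemma wt_pos (w : Λ → Λ → ℝ) (s : ℝ) (h : Λ → ℝ) (σ : Λ → Bool) : 0 < wt w s h σ :=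
  Real.exp_pos _

variable [DecidableEq Λ]

/-- The unnormalised expectation of `F`; `Nm w s h 1` is the partition function. -/
def Nm (w : Λ → Λ → ℝ) (s : ℝ) (h : Λ → ℝ) (F : (Λ → Bool) → ℝ) : ℝ :=
  ∑ σ, F σ * wt w s h σ

/-- The expectation of `F` under the Gibbs measure with weight `wt w s h`. -/
def Ex (w : Λ → Λ → ℝ) (s : ℝ) (h : Λ → ℝ) (F : (Λ → Bool) → ℝ) : ℝ :=
  Nm w s h F / Nm w s h 1

/-- The covariance of `F` and `G` under the Gibbs measure with weight `wt w s h`. -/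
def Cv (w : Λ → Λ → ℝ) (s : ℝ) (h : Λ → ℝ) (F G : (Λ → Bool) → ℝ) : ℝ :=
  Ex w s h (F * G) - Ex w s h F * Ex w s h G

lemma Nm_one_pos (w : Λ → Λ → ℝ) (s : ℝ) (h : Λ → ℝ) : 0 < Nm w s h 1 :=
  Finset.sum_pos (fun σ _ => by simpa using wt_pos w s h σ) Finset.univ_nonempty

/-! ### Derivatives in the time and in the field -/

lemma hasDerivAt_Nm_time (w : Λ → Λ → ℝ) (s : ℝ) (h : Λ → ℝ) (F : (Λ → Bool) → ℝ) :
    HasDerivAt (fun s => Nm w s h F)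
      (1 / 2 * ∑ i, Nm w s h (F * lin (w i) ^ 2)) s := by
  have key : ∀ σ, HasDerivAt (fun s => F σ * wt w s h σ)
      (F σ * (wt w s h σ * (1 / 2 * ∑ i, lin (w i) σ ^ 2))) s := fun σ => by
    have := (((((hasDerivAt_id s).div_const 2).mul_const (∑ i, lin (w i) σ ^ 2)).add_const
      (lin h σ)).exp).const_mul (F σ)
    simpa [wt] using this
  have := HasDerivAt.fun_sum (u := Finset.univ) fun σ _ => key σ
  refine this.congr_deriv (Eq.symm ?_)
  simp only [Nm, Finset.mul_sum, Pi.mul_apply, Pi.pow_apply]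
  rw [Finset.sum_comm]
  exact Finset.sum_congr rfl fun σ _ => Finset.sum_congr rfl fun i _ => by ring

lemma hasDerivAt_Nm_line (w : Λ → Λ → ℝ) (s : ℝ) (h v : Λ → ℝ) (F : (Λ → Bool) → ℝ) (t : ℝ) :
    HasDerivAt (fun t => Nm w s (h + t • v) F) (Nm w s (h + t • v) (F * lin v)) t := by
  have key : ∀ σ, HasDerivAt (fun t => F σ * wt w s (h + t • v) σ)
      (F σ * (wt w s (h + t • v) σ * lin v σ)) t := fun σ => by
    have := ((((hasDerivAt_id t).mul_const (lin v σ)).const_add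
      (s / 2 * ∑ i, lin (w i) σ ^ 2 + lin h σ)).exp).const_mul (F σ)
    simpa [wt, lin_add_smul, add_assoc] using this
  have := HasDerivAt.fun_sum (u := Finset.univ) fun σ _ => key σ
  refine this.congr_deriv (Eq.symm ?_)
  simp only [Nm, Pi.mul_apply]
  exact Finset.sum_congr rfl fun σ _ => by ring

lemma hasDerivAt_Ex_line (w : Λ → Λ → ℝ) (s : ℝ) (h v : Λ → ℝ) (F : (Λ → Bool) → ℝ) (t : ℝ) :
    HasDerivAt (fun t => Ex w s (h + t • v) F) (Cv w s (h + t • v) F (lin v)) t := by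
  have hZ := (Nm_one_pos w s (h + t • v)).ne'
  have := (hasDerivAt_Nm_line w s h v F t).fun_div (hasDerivAt_Nm_line w s h v 1 t) hZ
  refine this.congr_deriv (Eq.symm ?_)
  simp only [Cv, Ex, one_mul]
  field_simp

lemma hasDerivAt_Ex_time (w : Λ → Λ → ℝ) (s : ℝ) (h : Λ → ℝ) (F : (Λ → Bool) → ℝ) :
    HasDerivAt (fun s => Ex w s h F) (1 / 2 * ∑ i, Cv w s h F (lin (w i) ^ 2)) s := by
  have hZ := (Nm_one_pos w s h).ne'
  have := (hasDerivAt_Nm_time w s h F).fun_div (hasDerivAt_Nm_time w s h 1) hZ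
  refine this.congr_deriv (Eq.symm ?_)
  simp only [Cv, Ex, one_mul, Finset.sum_sub_distrib, ← Finset.sum_div, ← Finset.mul_sum]
  field_simp

/-- The second derivative of `⟨F⟩` along a line of fields is the third joint cumulant. In this form
it shows the heat equation: `½ ∂_v² ⟨F⟩ + ⟨v · σ⟩ ∂_v ⟨F⟩ = ½ Cov (F, (v · σ)²)`, to be compared
with `hasDerivAt_Ex_time`. -/
lemma hasDerivAt_Cv_line (w : Λ → Λ → ℝ) (s : ℝ) (h v : Λ → ℝ) (F : (Λ → Bool) → ℝ) :
    HasDerivAt (fun t : ℝ => Cv w s (h + t • v) F (lin v))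
      (Cv w s h F (lin v ^ 2) - 2 * Ex w s h (lin v) * Cv w s h F (lin v)) 0 := by
  have h1 := hasDerivAt_Ex_line w s h v (F * lin v) 0
  have h2 := hasDerivAt_Ex_line w s h v F 0
  have h3 := hasDerivAt_Ex_line w s h v (lin v) 0
  have := h1.fun_sub (h2.fun_mul h3)
  refine this.congr_deriv (Eq.symm ?_)
  simp only [Cv, zero_smul, add_zero, pow_two, mul_assoc]
  ring

/-! ### Expectations and covariances -/

lemma Ex_add (w : Λ → Λ → ℝ) (s : ℝ) (h : Λ → ℝ) (F G : (Λ → Bool) → ℝ) :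
    Ex w s h (F + G) = Ex w s h F + Ex w s h G := by
  simp [Ex, Nm, add_mul, Finset.sum_add_distrib, add_div]

lemma Ex_smul (w : Λ → Λ → ℝ) (s : ℝ) (h : Λ → ℝ) (c : ℝ) (F : (Λ → Bool) → ℝ) :
    Ex w s h (c • F) = c * Ex w s h F := by
  simp [Ex, Nm, mul_assoc, ← Finset.mul_sum, mul_div_assoc]

lemma Ex_one (w : Λ → Λ → ℝ) (s : ℝ) (h : Λ → ℝ) : Ex w s h 1 = 1 :=
  div_self (Nm_one_pos w s h).ne'

lemma Ex_mono (w : Λ → Λ → ℝ) (s : ℝ) (h : Λ → ℝ) {F G : (Λ → Bool) → ℝ} (hFG : ∀ σ, F σ ≤ G σ) :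
    Ex w s h F ≤ Ex w s h G := by
  refine div_le_div_of_nonneg_right ?_ (Nm_one_pos w s h).le
  exact Finset.sum_le_sum fun σ _ => mul_le_mul_of_nonneg_right (hFG σ) (wt_pos w s h σ).le

lemma Ex_const (w : Λ → Λ → ℝ) (s : ℝ) (h : Λ → ℝ) (c : ℝ) : Ex w s h (fun _ => c) = c := by
  have := Ex_smul w s h c 1
  rw [Ex_one, mul_one] at this
  convert this using 2
  ext; simp

lemma Cv_add_right (w : Λ → Λ → ℝ) (s : ℝ) (h : Λ → ℝ) (F G H : (Λ → Bool) → ℝ) :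
    Cv w s h F (G + H) = Cv w s h F G + Cv w s h F H := by
  simp only [Cv, mul_add, Ex_add]; ring

lemma Cv_smul_right (w : Λ → Λ → ℝ) (s : ℝ) (h : Λ → ℝ) (c : ℝ) (F G : (Λ → Bool) → ℝ) :
    Cv w s h F (c • G) = c * Cv w s h F G := by
  simp only [Cv, mul_smul_comm, Ex_smul]; ring

lemma Cv_comm (w : Λ → Λ → ℝ) (s : ℝ) (h : Λ → ℝ) (F G : (Λ → Bool) → ℝ) :
    Cv w s h F G = Cv w s h G F := by
  simp only [Cv, mul_comm]

lemma Cv_sum_right {ι : Type} (w : Λ → Λ → ℝ) (s : ℝ) (h : Λ → ℝ) (F : (Λ → Bool) → ℝ)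
    (S : Finset ι) (c : ι → ℝ) (G : ι → (Λ → Bool) → ℝ) :
    Cv w s h F (∑ i ∈ S, c i • G i) = ∑ i ∈ S, c i * Cv w s h F (G i) := by
  classical
  induction S using Finset.induction_on with
  | empty =>
    have := Cv_smul_right w s h 0 F 0
    simpa using this
  | insert i S hi ih =>
    rw [Finset.sum_insert hi, Finset.sum_insert hi, Cv_add_right, Cv_smul_right, ih]

lemma Cv_self_nonneg (w : Λ → Λ → ℝ) (s : ℝ) (h : Λ → ℝ) (F : (Λ → Bool) → ℝ) :
    0 ≤ Cv w s h F F := by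
  set m := Ex w s h F with hm
  have h0 : Ex w s h 0 ≤ Ex w s h (F * F + ((-2 * m) • F + (m ^ 2) • 1)) :=
    Ex_mono w s h fun σ => by
      simp only [Pi.add_apply, Pi.mul_apply, Pi.smul_apply, smul_eq_mul, Pi.one_apply, Pi.zero_apply]
      nlinarith [sq_nonneg (F σ - m)]
  have h00 : Ex w s h 0 = 0 := Ex_const w s h 0
  rw [Ex_add, Ex_add, Ex_smul, Ex_smul, Ex_one, h00, ← hm] at h0
  rw [Cv, ← hm]
  nlinarith

lemma Cv_sq_le (w : Λ → Λ → ℝ) (s : ℝ) (h : Λ → ℝ) (F G : (Λ → Bool) → ℝ) :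
    Cv w s h F G ^ 2 ≤ Cv w s h F F * Cv w s h G G := by
  have key : ∀ t : ℝ, 0 ≤ Cv w s h G G * (t * t) + (2 * Cv w s h F G) * t + Cv w s h F F :=
    fun t => by
      have := Cv_self_nonneg w s h (F + t • G)
      rw [Cv_add_right, Cv_smul_right, Cv_comm w s h (F + t • G) F,
        Cv_comm w s h (F + t • G) G, Cv_add_right, Cv_add_right, Cv_smul_right, Cv_smul_right,
        Cv_comm w s h G F] at this
      linarith
  have := discrim_le_zero key
  unfold discrim at this
  nlinarith

/-- A bound `l` on the covariance matrix of the spins controls the growth rate of the variance.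
With `c_i = Cov (F, w_i · σ)` and `v = Σ_i c_i w_i` one has `Σ_i c_i² = Cov (F, v · σ)`, and
Cauchy–Schwarz applies together with `|v|² ≤ r Σ_i c_i²`, the bound dual to `hw`. -/
lemma sum_Cv_sq_le (w : Λ → Λ → ℝ) (r : ℝ) (hr : 0 ≤ r)
    (hw : ∀ v : Λ → ℝ, ∑ i, (∑ x, w i x * v x) ^ 2 ≤ r * ∑ x, v x ^ 2)
    (s : ℝ) (h : Λ → ℝ) (l : ℝ) (hl : ∀ u : Λ → ℝ, Cv w s h (lin u) (lin u) ≤ l * ∑ x, u x ^ 2)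
    (hl0 : 0 ≤ l) (F : (Λ → Bool) → ℝ) :
    ∑ i, Cv w s h F (lin (w i)) ^ 2 ≤ r * l * Cv w s h F F := by
  set c : Λ → ℝ := fun i => Cv w s h F (lin (w i)) with hc
  set S := ∑ i, c i ^ 2 with hS
  have hS0 : 0 ≤ S := Finset.sum_nonneg fun i _ => sq_nonneg _
  set v : Λ → ℝ := ∑ i, c i • w i with hv
  have hvx : ∀ x, v x = ∑ i, c i * w i x := fun x => by simp [hv]
  set V := ∑ x, v x ^ 2 with hV
  have hV0 : 0 ≤ V := Finset.sum_nonneg fun i _ => sq_nonneg _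
  have hVS : V = ∑ i, c i * ∑ x, w i x * v x := by
    simp only [hV, Finset.mul_sum]
    rw [Finset.sum_comm]
    refine Finset.sum_congr rfl fun x _ => ?_
    rw [pow_two]; nth_rw 1 [hvx x]
    rw [Finset.sum_mul]
    exact Finset.sum_congr rfl fun i _ => by ring
  have hV1 : V ≤ r * S := by
    have h1 := Finset.sum_mul_sq_le_sq_mul_sq Finset.univ c (fun i => ∑ x, w i x * v x)
    rw [← hVS, ← hS] at h1
    have h2 : V ^ 2 ≤ S * (r * V) := h1.trans (mul_le_mul_of_nonneg_left (hw v) hS0)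
    rcases hV0.eq_or_lt with h3 | h3
    · rw [← h3]; positivity
    · nlinarith
  have hlin : lin v = ∑ i, c i • lin (w i) := by
    ext σ
    simp only [lin, hvx, Finset.sum_apply, Pi.smul_apply, smul_eq_mul, Finset.mul_sum, Finset.sum_mul]
    rw [Finset.sum_comm]
    exact Finset.sum_congr rfl fun i _ => Finset.sum_congr rfl fun x _ => by ring
  have hCS : Cv w s h F (lin v) = S := by
    rw [hlin, Cv_sum_right, hS]
    exact Finset.sum_congr rfl fun i _ => by rw [pow_two]
  have h4 := Cv_sq_le w s h F (lin v)
  rw [hCS] at h4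
  have hF := Cv_self_nonneg w s h F
  have h5 : S ^ 2 ≤ Cv w s h F F * (l * (r * S)) :=
    h4.trans (mul_le_mul_of_nonneg_left ((hl v).trans (mul_le_mul_of_nonneg_left hV1 hl0)) hF)
  rcases hS0.eq_or_lt with h3 | h3
  · rw [← h3]; positivity
  · nlinarith

/-! ### The product case -/

/-- The local energy `Σ_x (F(σ) - F(σˣ))²`, the integrand of the Dirichlet form. -/
def Dg (F : (Λ → Bool) → ℝ) : (Λ → Bool) → ℝ := fun σ => ∑ x, (F σ - F (flip x σ)) ^ 2

lemma Dg_lin (u : Λ → ℝ) : Dg (lin u) = fun _ => 4 * ∑ x, u x ^ 2 := by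
  ext σ
  rw [Dg, Finset.mul_sum]
  refine Finset.sum_congr rfl fun x _ => ?_
  have : lin u σ - lin u (flip x σ) = 2 * u x * sp (σ x) := by
    rw [lin, lin, ← Finset.sum_sub_distrib, Finset.sum_eq_single x]
    · simp [flip, sp_not]; ring
    · intro y _ hy; simp [flip, hy]
    · simp
  rw [this, mul_pow, sp_sq]; ring

lemma sum_flip (x : Λ) (G : (Λ → Bool) → ℝ) : ∑ σ, G (flip x σ) = ∑ σ, G σ :=
  Function.Bijective.sum_comp (Function.Involutive.bijective (flip_flip x)) G

lemma eq_of_flip_invariant (G : (Λ → Bool) → ℝ) (hG : ∀ x σ, G (flip x σ) = G σ) (σ τ : Λ → Bool) :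
    G τ = G σ := by
  have hup : ∀ x b σ, G (Function.update σ x b) = G σ := fun x b σ => by
    by_cases hb : b = σ x
    · rw [hb, Function.update_eq_self]
    · have : b = !(σ x) := by cases b <;> cases h : σ x <;> simp_all
      rw [this]; exact hG x σ
  have : ∀ S : Finset Λ, G (S.piecewise τ σ) = G σ := fun S => by
    induction S using Finset.induction_on with
    | empty => simp
    | insert x S _ ih => rw [Finset.piecewise_insert, hup, ih]
  simpa using this Finset.univ

/-- One step of the Efron–Stein argument: `H` is the conditional expectation of `G` given the
spins off `x`, under the weight `p`. The hypothesis `hprod` says that the conditional law of the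
spin at `x` is independent of the other spins; it makes the averaging commute with the flips at
other sites, so that no Dirichlet term increases. -/
lemma site_average (p : (Λ → Bool) → ℝ) (hp : ∀ σ, 0 < p σ) (x : Λ)
    (hprod : ∀ y, y ≠ x → ∀ σ, p σ * p (flip y (flip x σ)) = p (flip x σ) * p (flip y σ))
    (G : (Λ → Bool) → ℝ) :
    ∃ H : (Λ → Bool) → ℝ, ∑ σ, H σ * p σ = ∑ σ, G σ * p σ ∧
      ∑ σ, G σ ^ 2 * p σ ≤ ∑ σ, H σ ^ 2 * p σ +
        1 / 4 * ∑ σ, (G σ - G (flip x σ)) ^ 2 * p σ ∧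
      (∀ σ, H (flip x σ) = H σ) ∧
      (∀ y, (∀ σ, G (flip y σ) = G σ) → ∀ σ, H (flip y σ) = H σ) ∧
      (∀ y, ∑ σ, (H σ - H (flip y σ)) ^ 2 * p σ ≤ ∑ σ, (G σ - G (flip y σ)) ^ 2 * p σ) := by
  -- `c σ` is the conditional probability of the spin at `x` opposite to the one in `σ`
  set c : (Λ → Bool) → ℝ := fun σ => p (flip x σ) / (p σ + p (flip x σ)) with hc
  have hpos : ∀ σ, 0 < p σ + p (flip x σ) := fun σ => add_pos (hp _) (hp _)
  have hc0 : ∀ σ, 0 ≤ c σ := fun σ => div_nonneg (hp _).le (hpos σ).le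
  have hc1 : ∀ σ, c σ + c (flip x σ) = 1 := fun σ => by
    have := (hpos σ).ne'
    have h2 := (hpos (flip x σ)).ne'
    simp only [hc, flip_flip] at h2 ⊢
    rw [add_comm (p (flip x σ)) (p σ), ← add_div, add_comm (p (flip x σ)), div_self this]
  have hsym : ∀ σ, c (flip x σ) * p (flip x σ) = c σ * p σ := fun σ => by
    simp only [hc, flip_flip]
    rw [add_comm (p (flip x σ)) (p σ)]; ring
  have hcy : ∀ y, y ≠ x → ∀ σ, c (flip y σ) = c σ := fun y hy σ => by
    have h1 := (hpos σ).ne'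
    have h2 := (hpos (flip y σ)).ne'
    have h3 := hprod y hy σ
    rw [flip_comm] at h3
    simp only [hc]
    rw [div_eq_div_iff h2 h1]
    linear_combination h3
  have symm : ∀ (K : (Λ → Bool) → ℝ), 2 * ∑ σ, K σ = ∑ σ, (K σ + K (flip x σ)) := fun K => by
    rw [Finset.sum_add_distrib, sum_flip, two_mul]
  have hmean : ∀ K : (Λ → Bool) → ℝ,
      ∑ σ, (K σ - c σ * (K σ - K (flip x σ))) * p σ = ∑ σ, K σ * p σ := fun K => by
    have h1 : ∑ σ, (c σ * (K σ - K (flip x σ)) * p σ) = 0 := by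
      have h2 := symm fun σ => (c σ * (K σ - K (flip x σ)) * p σ)
      have h3 : ∑ σ, (c σ * (K σ - K (flip x σ)) * p σ + c (flip x σ) *
          (K (flip x σ) - K (flip x (flip x σ))) * p (flip x σ)) = 0 := by
        refine Finset.sum_eq_zero fun σ _ => ?_
        rw [flip_flip]
        linear_combination (K (flip x σ) - K σ) * hsym σ
      linarith
    simp only [sub_mul (K _), Finset.sum_sub_distrib]
    rw [h1, sub_zero]
  refine ⟨fun σ => G σ - c σ * (G σ - G (flip x σ)), hmean G, ?_, ?_, ?_, ?_⟩
  · have key : 2 * ∑ σ, (G σ ^ 2 * p σ - (G σ - c σ * (G σ - G (flip x σ))) ^ 2 * p σ -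
        1 / 4 * ((G σ - G (flip x σ)) ^ 2 * p σ)) ≤ 0 := by
      rw [symm]
      refine Finset.sum_nonpos fun σ _ => ?_
      have h1 := hsym σ
      have h2 := hc1 σ
      have h3 : c σ * (p σ + p (flip x σ)) = p (flip x σ) := div_mul_cancel₀ _ (hpos σ).ne'
      simp only [flip_flip]
      have h4 : c (flip x σ) = 1 - c σ := by linarith
      have h5 := hpos σ
      rw [h4] at *
      generalize c σ = a at *
      generalize p (flip x σ) = q at *
      generalize p σ = q' at *
      generalize G σ = g at *
      generalize G (flip x σ) = g' at *
      have : (g ^ 2 * q' - (g - a * (g - g')) ^ 2 * q' - 1 / 4 * ((g - g') ^ 2 * q') +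
          (g' ^ 2 * q - (g' - (1 - a) * (g' - g)) ^ 2 * q - 1 / 4 * ((g' - g) ^ 2 * q))) =
          - ((q' + q) * (a - 1 / 2) ^ 2 * (g - g') ^ 2) := by
        have hq : q = a * (q' + q) := h3.symm
        have hq' : q' = (1 - a) * (q' + q) := by linarith
        generalize q' + q = t at *
        subst hq hq'
        ring
      rw [this]
      have : 0 ≤ (q' + q) * (a - 1 / 2) ^ 2 * (g - g') ^ 2 := by positivity
      linarith
    rw [Finset.sum_sub_distrib, Finset.sum_sub_distrib, ← Finset.mul_sum] at key
    linarith
  · intro σ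
    have := hc1 σ
    simp only [flip_flip]
    linear_combination (G σ - G (flip x σ)) * this
  · intro y hy σ
    by_cases hyx : y = x
    · subst hyx; simp [hy]
    · simp only [hcy y hyx, hy, flip_comm x y]
  · intro y
    by_cases hyx : y = x
    · subst hyx
      refine Finset.sum_le_sum fun σ _ => mul_le_mul_of_nonneg_right ?_ (hp σ).le
      have := hc1 σ
      have h0 : (G σ - c σ * (G σ - G (flip y σ))) - (G (flip y σ) -
        c (flip y σ) * (G (flip y σ) - G (flip y (flip y σ)))) = 0 := by
        rw [flip_flip]
        linear_combination (- (G σ - G (flip y σ))) * this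
      rw [h0, zero_pow two_ne_zero]; positivity
    · refine le_trans (Finset.sum_le_sum fun σ _ => ?_)
        (hmean fun σ => (G σ - G (flip y σ)) ^ 2).le
      refine mul_le_mul_of_nonneg_right ?_ (hp σ).le
      simp only [hcy y hyx, flip_comm x y]
      have h1 := hc0 σ
      have h2 : c σ ≤ 1 := by linarith [hc1 σ, hc0 (flip x σ)]
      nlinarith [mul_nonneg (mul_nonneg h1 (sub_nonneg.2 h2))
        (sq_nonneg ((G σ - G (flip y σ)) - (G (flip x σ) - G (flip y (flip x σ)))))]

/-- The spectral gap inequality for product measures (`s = 0`): averaging out the sites one after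
another turns `F` into a constant, each site costing at most a quarter of its Dirichlet term. -/
lemma product_poincare (w : Λ → Λ → ℝ) (h : Λ → ℝ) (F : (Λ → Bool) → ℝ) :
    Cv w 0 h F F ≤ 1 / 4 * Ex w 0 h (Dg F) := by
  set p := wt w 0 h with hpdef
  have hp : ∀ σ, 0 < p σ := wt_pos w 0 h
  have hprod : ∀ x y, y ≠ x → ∀ σ,
      p σ * p (flip y (flip x σ)) = p (flip x σ) * p (flip y σ) := fun x y hy σ => by
    simp only [hpdef, wt, zero_div, zero_mul, zero_add, ← Real.exp_add]
    congr 1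
    simp only [lin, ← Finset.sum_add_distrib]
    refine Finset.sum_congr rfl fun z _ => ?_
    simp only [flip, Function.update_apply]
    by_cases h1 : z = y
    · subst h1; simp [hy]
    · by_cases h2 : z = x
      · subst h2; simp [h1]; ring
      · simp [h1, h2]
  have main : ∀ S : Finset Λ, ∃ G : (Λ → Bool) → ℝ, ∑ σ, G σ * p σ = ∑ σ, F σ * p σ ∧
      ∑ σ, F σ ^ 2 * p σ ≤ ∑ σ, G σ ^ 2 * p σ +
        1 / 4 * ∑ x ∈ S, ∑ σ, (F σ - F (flip x σ)) ^ 2 * p σ ∧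
      (∀ x ∈ S, ∀ σ, G (flip x σ) = G σ) ∧
      (∀ y, ∑ σ, (G σ - G (flip y σ)) ^ 2 * p σ ≤ ∑ σ, (F σ - F (flip y σ)) ^ 2 * p σ) := by
    intro S
    induction S using Finset.induction_on with
    | empty => exact ⟨F, by simp⟩
    | insert x S hx ih =>
      obtain ⟨G, h1, h2, h3, h4⟩ := ih
      obtain ⟨H, k1, k2, k3, k4, k5⟩ := site_average p hp x (hprod x) G
      refine ⟨H, k1.trans h1, ?_, ?_, fun y => (k5 y).trans (h4 y)⟩
      · rw [Finset.sum_insert hx]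
        linarith [h4 x]
      · intro y hy
        rcases Finset.mem_insert.1 hy with rfl | hy
        · exact k3
        · exact k4 y (h3 y hy)
  obtain ⟨G, h1, h2, h3, -⟩ := main Finset.univ
  have hZ := Nm_one_pos w 0 h
  obtain ⟨g, hg⟩ : ∃ g, ∀ σ, G σ = g :=
    ⟨G fun _ => true, fun σ => eq_of_flip_invariant G (fun x => h3 x (Finset.mem_univ x)) _ _⟩
  have hZ' : Nm w 0 h 1 = ∑ σ, p σ := by simp [Nm, hpdef]
  simp only [hg, ← Finset.mul_sum, ← hZ'] at h1 h2
  have e1 : Ex w 0 h F = g := by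
    rw [Ex, div_eq_iff hZ.ne', h1]; rfl
  have e2 : Nm w 0 h (F * F) = ∑ σ, F σ ^ 2 * p σ := by
    simp [Nm, hpdef, pow_two]
  have e3 : Nm w 0 h (Dg F) = ∑ x, ∑ σ, (F σ - F (flip x σ)) ^ 2 * p σ := by
    rw [Finset.sum_comm]
    simp [Nm, hpdef, Dg, Finset.sum_mul]
  rw [Cv, e1, Ex, Ex, e2, e3, ← mul_div_assoc, div_sub' hZ.ne']
  exact div_le_div_of_nonneg_right (by linarith) hZ.le

/-! ### The maximum principle -/

lemma continuous_Ex {X : Type} [TopologicalSpace X] (w : Λ → Λ → ℝ) {s : X → ℝ} {h : X → Λ → ℝ}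
    {F : X → (Λ → Bool) → ℝ} (hs : Continuous s) (hh : Continuous h) (hF : Continuous F) :
    Continuous fun q => Ex w (s q) (h q) (F q) := by
  have hh' : ∀ x, Continuous fun q => h q x := fun x => (continuous_apply x).comp hh
  have hF' : ∀ σ, Continuous fun q => F q σ := fun σ => (continuous_apply σ).comp hF
  refine Continuous.div ?_ ?_ fun q => (Nm_one_pos w (s q) (h q)).ne'
  · unfold Nm wt lin; fun_prop
  · unfold Nm wt lin; fun_prop

/-- The function `Ψ = (1 - r s) Var F - ¼ ⟨D F⟩` to which the maximum principle is applied. -/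
def Psi (w : Λ → Λ → ℝ) (r s : ℝ) (h : Λ → ℝ) (F : (Λ → Bool) → ℝ) : ℝ :=
  (1 - r * s) * Cv w s h F F - 1 / 4 * Ex w s h (Dg F)

/-- The derivative of `Ψ` with respect to the field `h` in the direction `v`. -/
def dPsi (w : Λ → Λ → ℝ) (r s : ℝ) (h v : Λ → ℝ) (F : (Λ → Bool) → ℝ) : ℝ :=
  (1 - r * s) * (Cv w s h (F * F) (lin v) - 2 * Ex w s h F * Cv w s h F (lin v)) -
    1 / 4 * Cv w s h (Dg F) (lin v)

lemma continuous_Psi (w : Λ → Λ → ℝ) (r : ℝ) :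
    Continuous fun q : ℝ × (Λ → ℝ) × ((Λ → Bool) → ℝ) => Psi w r q.1 q.2.1 q.2.2 := by
  have h1 := continuous_Ex w (X := ℝ × (Λ → ℝ) × ((Λ → Bool) → ℝ)) continuous_fst
    (continuous_fst.comp continuous_snd) (continuous_snd.comp continuous_snd)
  have h2 := continuous_Ex w (X := ℝ × (Λ → ℝ) × ((Λ → Bool) → ℝ)) continuous_fst
    (continuous_fst.comp continuous_snd) (F := fun q => q.2.2 * q.2.2) (by fun_prop)
  have h3 := continuous_Ex w (X := ℝ × (Λ → ℝ) × ((Λ → Bool) → ℝ)) continuous_fst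
    (continuous_fst.comp continuous_snd) (F := fun q => Dg q.2.2) (by unfold Dg; fun_prop)
  simp only [Function.comp_apply] at h1 h2 h3
  unfold Psi Cv
  fun_prop

lemma hasDerivAt_Psi_line (w : Λ → Λ → ℝ) (r s : ℝ) (h v : Λ → ℝ) (F : (Λ → Bool) → ℝ) (t : ℝ) :
    HasDerivAt (fun t : ℝ => Psi w r s (h + t • v) F) (dPsi w r s (h + t • v) v F) t := by
  have h1 := hasDerivAt_Ex_line w s h v (F * F) t
  have h2 := hasDerivAt_Ex_line w s h v F t
  have h3 := hasDerivAt_Ex_line w s h v (Dg F) t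
  have := ((h1.fun_sub (h2.fun_mul h2)).const_mul (1 - r * s)).fun_sub (h3.const_mul (1 / 4))
  refine this.congr_deriv ?_
  simp only [dPsi]; ring

lemma hasDerivAt_dPsi_line (w : Λ → Λ → ℝ) (r s : ℝ) (h v : Λ → ℝ) (F : (Λ → Bool) → ℝ) :
    HasDerivAt (fun t : ℝ => dPsi w r s (h + t • v) v F)
      ((1 - r * s) * (Cv w s h (F * F) (lin v ^ 2) - 2 * Ex w s h F * Cv w s h F (lin v ^ 2)
          - 2 * Cv w s h F (lin v) ^ 2)
        - 1 / 4 * Cv w s h (Dg F) (lin v ^ 2)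
        - 2 * Ex w s h (lin v) * dPsi w r s h v F) 0 := by
  have h1 := hasDerivAt_Cv_line w s h v (F * F)
  have h2 := hasDerivAt_Cv_line w s h v F
  have h3 := hasDerivAt_Cv_line w s h v (Dg F)
  have h4 := hasDerivAt_Ex_line w s h v F 0
  have := ((h1.fun_sub ((h4.const_mul 2).fun_mul h2)).const_mul (1 - r * s)).fun_sub
    (h3.const_mul (1 / 4))
  refine this.congr_deriv ?_
  simp only [dPsi, zero_smul, add_zero]; ring

lemma hasDerivAt_Psi_time (w : Λ → Λ → ℝ) (r s : ℝ) (h : Λ → ℝ) (F : (Λ → Bool) → ℝ) :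
    HasDerivAt (fun s => Psi w r s h F)
      (-r * Cv w s h F F + ∑ i, 1 / 2 * ((1 - r * s) * (Cv w s h (F * F) (lin (w i) ^ 2)
          - 2 * Ex w s h F * Cv w s h F (lin (w i) ^ 2))
        - 1 / 4 * Cv w s h (Dg F) (lin (w i) ^ 2))) s := by
  have h1 := hasDerivAt_Ex_time w s h (F * F)
  have h2 := hasDerivAt_Ex_time w s h F
  have h3 := hasDerivAt_Ex_time w s h (Dg F)
  have h0 : HasDerivAt (fun s => 1 - r * s) (-r) s := by
    simpa using ((hasDerivAt_id s).const_mul r).const_sub 1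
  have := (h0.fun_mul (h1.fun_sub (h2.fun_mul h2))).fun_sub (h3.const_mul (1 / 4))
  refine this.congr_deriv ?_
  simp only [Cv, ← Finset.mul_sum, Finset.sum_sub_distrib]
  ring

lemma second_deriv_nonpos {f g : ℝ → ℝ} {g' : ℝ} (hf : ∀ t, HasDerivAt f (g t) t)
    (hg : HasDerivAt g g' 0) (hmax : ∀ t, f t ≤ f 0) : g 0 = 0 ∧ g' ≤ 0 := by
  have h0 : g 0 = 0 := by
    refine IsLocalMax.hasDerivAt_eq_zero (Filter.Eventually.of_forall hmax) (hf 0)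
  refine ⟨h0, ?_⟩
  by_contra! hpos
  have h1 := hasDerivAt_iff_tendsto_slope.1 hg
  have h2 : ∀ᶠ t in nhdsWithin (0 : ℝ) (Set.Ioi 0), 0 < slope g 0 t :=
    (h1.mono_left (nhdsWithin_mono _ fun t ht => ne_of_gt ht)).eventually (lt_mem_nhds hpos)
  obtain ⟨δ, hδ, h3⟩ := mem_nhdsGT_iff_exists_Ioo_subset.1 h2
  have hδ : (0 : ℝ) < δ := hδ
  have hgpos : ∀ t ∈ Set.Ioo 0 δ, 0 < g t := fun t ht => by
    have := h3 ht
    simp only [Set.mem_ofPred_eq, slope_def_field, h0, sub_zero] at this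
    exact (div_pos_iff_of_pos_right ht.1).1 this
  have hmono : StrictMonoOn f (Set.Icc 0 (δ / 2)) := by
    refine strictMonoOn_of_deriv_pos (convex_Icc _ _)
      (fun t _ => (hf t).continuousAt.continuousWithinAt) fun t ht => ?_
    rw [interior_Icc] at ht
    rw [(hf t).deriv]
    exact hgpos t ⟨ht.1, by linarith [ht.2]⟩
  have := hmono (a := 0) (b := δ / 2) ⟨le_rfl, by linarith⟩ ⟨by linarith, le_rfl⟩ (by linarith)
  linarith [hmax (δ / 2)]

lemma deriv_nonneg_of_left_max {f : ℝ → ℝ} {f' a b : ℝ} (hab : a < b) (hf : HasDerivAt f f' b)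
    (hmax : ∀ t ∈ Set.Icc a b, f t ≤ f b) : 0 ≤ f' := by
  have h1 := (hasDerivAt_iff_tendsto_slope.1 hf).mono_left
    (nhdsWithin_mono b fun t (ht : t ∈ Set.Iio b) => ne_of_lt ht)
  refine ge_of_tendsto h1 ?_
  filter_upwards [Ioo_mem_nhdsLT hab] with t ht
  rw [slope_def_field]
  exact div_nonneg_of_nonpos (by linarith [hmax t ⟨ht.1.le, ht.2.le⟩]) (by linarith [ht.2])

/-- The parabolic maximum principle for `Ψ`, uniformly over a compact family `U` of observables.
The hypothesis `key` is `∂_s Ψ - L Ψ ≤ K₁ Ψ`, with the left side computed, and is required only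
where `Ψ > 0` and `F` maximizes `Ψ s h` over `U`. The proof looks at a maximum of
`exp (-K s) Ψ - ε (1 + |h|²)`: the penalty confines `h` to a compact set, and `K` absorbs both `K₁`
and the effect of `L` on the penalty. -/
lemma max_principle (w : Λ → Λ → ℝ) (r : ℝ) (hr0 : 0 ≤ r)
    (U : Set ((Λ → Bool) → ℝ)) (hU : IsCompact U) (b : ℝ) (hb : ∀ F ∈ U, ∀ σ, F σ ^ 2 ≤ b)
    (K₁ : ℝ)
    (key : ∀ s ∈ Set.Icc (0 : ℝ) 1, ∀ h, ∀ F ∈ U, 0 < Psi w r s h F →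
      (∀ F' ∈ U, Psi w r s h F' ≤ Psi w r s h F) →
      -r * Cv w s h F F + (1 - r * s) * ∑ i, Cv w s h F (lin (w i)) ^ 2 ≤ K₁ * Psi w r s h F)
    (s : ℝ) (hs : s ∈ Set.Icc (0 : ℝ) 1) (h : Λ → ℝ) (F : (Λ → Bool) → ℝ) (hF : F ∈ U) :
    Psi w r s h F ≤ 0 := by
  by_contra! hpos
  set W := ∑ i, ∑ x, w i x ^ 2 with hW
  have hW0 : 0 ≤ W := Finset.sum_nonneg fun i _ => Finset.sum_nonneg fun x _ => sq_nonneg _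
  set n : ℝ := (Fintype.card Λ : ℝ) with hn
  have hn0 : 0 ≤ n := by positivity
  set K := |K₁| + 2 * W + n * W + 1 with hK
  set P : ℝ × (Λ → ℝ) × ((Λ → Bool) → ℝ) → ℝ := fun q => Real.exp (-K * q.1) * Psi w r q.1 q.2.1 q.2.2
    with hP
  set sq : (Λ → ℝ) → ℝ := fun k => ∑ x, k x ^ 2 with hsq
  have hsq0 : ∀ k, 0 ≤ sq k := fun k => Finset.sum_nonneg fun x _ => sq_nonneg _
  have hP0 : 0 < P (s, h, F) := mul_pos (Real.exp_pos _) hpos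
  obtain ⟨ε, hε, hεP⟩ : ∃ ε > 0, ε * (1 + sq h) < P (s, h, F) := by
    have := hsq0 h
    refine ⟨P (s, h, F) / (2 * (1 + sq h)), by positivity, ?_⟩
    have h1 : P (s, h, F) / (2 * (1 + sq h)) * (1 + sq h) = P (s, h, F) / 2 := by field_simp
    rw [h1]; linarith
  set Φ : ℝ × (Λ → ℝ) × ((Λ → Bool) → ℝ) → ℝ := fun q => P q - ε * (1 + sq q.2.1) with hΦ
  have hΦc : Continuous Φ := by
    have := continuous_Psi w r
    simp only [hΦ, hP, hsq]
    fun_prop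
  have hb0 : 0 ≤ b := (sq_nonneg _).trans (hb F hF fun _ => true)
  have hPb : ∀ s ∈ Set.Icc (0 : ℝ) 1, ∀ k, ∀ F ∈ U, P (s, k, F) ≤ b := fun s hs k F hF => by
    have h1 : Ex w s k (F * F) ≤ b :=
      (Ex_mono w s k fun σ => by simpa [pow_two] using hb F hF σ).trans (Ex_const w s k b).le
    have h2 : 0 ≤ Ex w s k (Dg F) := by
      have := Ex_mono w s k (F := fun _ => 0) (G := Dg F)
        fun σ => Finset.sum_nonneg fun x _ => sq_nonneg _
      rwa [Ex_const] at this
    have h3 : Psi w r s k F ≤ b := by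
      have h4 : Cv w s k F F ≤ b := by
        have := mul_self_nonneg (Ex w s k F)
        rw [Cv]; linarith
      have h5 := Cv_self_nonneg w s k F
      have h6 : 0 ≤ r * s := mul_nonneg hr0 hs.1
      rw [Psi]
      nlinarith
    have h4 : Real.exp (-K * s) ≤ 1 := by
      have hK0 : 0 ≤ K := by positivity
      refine Real.exp_le_one_iff.2 ?_
      have := mul_nonneg hK0 hs.1
      linarith
    calc Real.exp (-K * s) * Psi w r s k F ≤ Real.exp (-K * s) * b :=
          mul_le_mul_of_nonneg_left h3 (Real.exp_pos _).le
      _ ≤ 1 * b := mul_le_mul_of_nonneg_right h4 hb0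
      _ = b := one_mul b
  -- a positive value of `Φ` forces `|h|² ≤ b / ε`, so `Φ` has a global maximum
  set R := Real.sqrt (b / ε) with hR
  have hcpt : IsCompact (Set.Icc (0 : ℝ) 1 ×ˢ (Set.Icc (fun _ : Λ => -R) (fun _ => R)) ×ˢ U) :=
    isCompact_Icc.prod (isCompact_Icc.prod hU)
  have hout : ∀ s ∈ Set.Icc (0 : ℝ) 1, ∀ k, ∀ F ∈ U, 0 ≤ Φ (s, k, F) →
      k ∈ Set.Icc (fun _ : Λ => -R) (fun _ => R) := fun s hs k F hF h0 => by
    have h1 := hPb s hs k F hF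
    have h2 : sq k ≤ b / ε := by
      rw [le_div_iff₀ hε]
      simp only [hΦ] at h0
      nlinarith
    have h3 : ∀ x, |k x| ≤ R := fun x => by
      refine Real.abs_le_sqrt (le_trans ?_ h2)
      exact Finset.single_le_sum (f := fun x => k x ^ 2) (fun y _ => sq_nonneg _) (Finset.mem_univ x)
    exact ⟨fun x => (abs_le.1 (h3 x)).1, fun x => (abs_le.1 (h3 x)).2⟩
  have hΦ0 : 0 < Φ (s, h, F) := by simp only [hΦ]; linarith
  obtain ⟨⟨t, k, G⟩, ⟨ht, hk, hG⟩, hmax⟩ := hcpt.exists_isMaxOn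
    ⟨(s, h, F), hs, hout s hs h F hF hΦ0.le, hF⟩ hΦc.continuousOn
  have hmaxpos : 0 < Φ (t, k, G) :=
    hΦ0.trans_le (hmax ⟨hs, hout s hs h F hF hΦ0.le, hF⟩)
  have hglob : ∀ s' ∈ Set.Icc (0 : ℝ) 1, ∀ k', ∀ G' ∈ U, Φ (s', k', G') ≤ Φ (t, k, G) := by
    intro s' hs' k' G' hG'
    rcases le_total 0 (Φ (s', k', G')) with h0 | h0
    · exact hmax ⟨hs', hout s' hs' k' G' hG' h0, hG'⟩
    · exact h0.trans hmaxpos.le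
  simp only at ht hk hG
  clear hmax
  have hkpos := hsq0 k
  have hE := Real.exp_pos (-K * t)
  have hPsi : ε * (1 + sq k) < Real.exp (-K * t) * Psi w r t k G := by
    simp only [hΦ, hP] at hmaxpos; linarith
  have hPsipos : 0 < Psi w r t k G := by
    refine pos_of_mul_pos_right (lt_trans ?_ hPsi) hE.le
    positivity
  have ht0 : 0 < t := by
    refine lt_of_le_of_ne ht.1 fun h0 => ?_
    have h1 := product_poincare w k G
    rw [← h0, Psi] at hPsipos
    linarith
  have hGmax : ∀ F' ∈ U, Psi w r t k F' ≤ Psi w r t k G := fun F' hF' => by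
    have := hglob t ht k F' hF'
    simp only [hΦ, hP] at this
    exact le_of_mul_le_mul_left (by linarith) hE
  have hkey := key t ht k G hG hPsipos hGmax
  have htime := deriv_nonneg_of_left_max ht0 ((((((hasDerivAt_id t).const_mul (-K)).exp).fun_mul
    (hasDerivAt_Psi_time w r t k G))).sub_const (ε * (1 + sq k)))
    fun s' hs' => hglob s' ⟨hs'.1, hs'.2.trans ht.2⟩ k G hG
  simp only [id_eq, mul_one] at htime
  -- first and second order conditions at the maximum, along each line `k + τ w_i`
  have hspace : ∀ i, Real.exp (-K * t) * dPsi w r t k (w i) G - ε * (2 * ∑ x, k x * w i x) = 0 ∧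
      Real.exp (-K * t) * ((1 - r * t) * (Cv w t k (G * G) (lin (w i) ^ 2)
          - 2 * Ex w t k G * Cv w t k G (lin (w i) ^ 2)
          - 2 * Cv w t k G (lin (w i)) ^ 2)
        - 1 / 4 * Cv w t k (Dg G) (lin (w i) ^ 2)
        - 2 * Ex w t k (lin (w i)) * dPsi w r t k (w i) G) - ε * (2 * ∑ x, w i x ^ 2) ≤ 0 := by
    intro i
    have hq : ∀ τ : ℝ, sq (k + τ • w i) =
        sq k + τ * (2 * ∑ x, k x * w i x) + τ ^ 2 * ∑ x, w i x ^ 2 := fun τ => by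
      simp only [hsq, Finset.mul_sum, ← Finset.sum_add_distrib, Pi.add_apply, Pi.smul_apply,
        smul_eq_mul]
      exact Finset.sum_congr rfl fun x _ => by ring
    have d1 : ∀ τ : ℝ, HasDerivAt (fun τ : ℝ => Φ (t, k + τ • w i, G))
        (Real.exp (-K * t) * dPsi w r t (k + τ • w i) (w i) G -
          ε * (2 * ∑ x, k x * w i x + 2 * τ * ∑ x, w i x ^ 2)) τ := fun τ => by
      have e1 := (hasDerivAt_Psi_line w r t k (w i) G τ).const_mul (Real.exp (-K * t))
      have e2 : HasDerivAt (fun τ : ℝ => 1 + sq (k + τ • w i))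
          (2 * ∑ x, k x * w i x + 2 * τ * ∑ x, w i x ^ 2) τ := by
        simp only [hq]
        have := ((((hasDerivAt_id τ).mul_const (2 * ∑ x, k x * w i x)).const_add (sq k)).fun_add
          (((hasDerivAt_id τ).fun_pow 2).mul_const (∑ x, w i x ^ 2))).const_add 1
        refine this.congr_deriv ?_
        simp
      exact e1.fun_sub (e2.const_mul ε)
    have d2 : HasDerivAt (fun τ : ℝ => Real.exp (-K * t) * dPsi w r t (k + τ • w i) (w i) G -
          ε * (2 * ∑ x, k x * w i x + 2 * τ * ∑ x, w i x ^ 2)) _ 0 :=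
      ((hasDerivAt_dPsi_line w r t k (w i) G).const_mul (Real.exp (-K * t))).fun_sub
        (((((hasDerivAt_id (0 : ℝ)).const_mul 2).mul_const (∑ x, w i x ^ 2)).const_add
          (2 * ∑ x, k x * w i x)).const_mul ε)
    obtain ⟨c1, c2⟩ := second_deriv_nonpos d1 d2 fun τ => by
      have := hglob t ht (k + τ • w i) G hG
      simpa using this
    constructor
    · simpa using c1
    · simpa using c2
  -- `L (1 + |h|²)` is at most a multiple of `1 + |h|²`, as `⟨w_i · σ⟩` is bounded
  have hdrift : ∑ i, (∑ x, w i x ^ 2 + Ex w t k (lin (w i)) * (2 * ∑ x, k x * w i x)) ≤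
      (2 * W + n * W) * (1 + sq k) := by
    have e1 : ∀ i, ∑ x, w i x ^ 2 + Ex w t k (lin (w i)) * (2 * ∑ x, k x * w i x) ≤
        (2 + n) * (1 + sq k) * ∑ x, w i x ^ 2 := fun i => by
      set a := ∑ x, w i x ^ 2 with ha
      have ha0 : 0 ≤ a := Finset.sum_nonneg fun x _ => sq_nonneg _
      have f1 : Ex w t k (lin (w i)) ^ 2 ≤ n * a := by
        have g1 := Cv_self_nonneg w t k (lin (w i))
        have g2 : Ex w t k (lin (w i) * lin (w i)) ≤ a * n :=
          (Ex_mono w t k fun σ => by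
            have := lin_sq_le (w i) σ
            rw [pow_two] at this
            exact this).trans
            (Ex_const w t k (a * n)).le
        rw [Cv] at g1
        nlinarith
      have f2 : (∑ x, k x * w i x) ^ 2 ≤ sq k * a :=
        Finset.sum_mul_sq_le_sq_mul_sq Finset.univ k (w i)
      nlinarith [sq_nonneg (Ex w t k (lin (w i)) - ∑ x, k x * w i x), mul_nonneg ha0 hkpos,
        mul_nonneg hn0 (mul_nonneg ha0 hkpos), mul_nonneg hn0 ha0]
    calc _ ≤ ∑ i, (2 + n) * (1 + sq k) * ∑ x, w i x ^ 2 := Finset.sum_le_sum fun i _ => e1 i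
      _ = (2 * W + n * W) * (1 + sq k) := by rw [← Finset.mul_sum, ← hW]; ring
  -- half the second order conditions plus `⟨w_i · σ⟩` times the first order ones, summed over `i`
  have hsum : Real.exp (-K * t) * ∑ i, 1 / 2 * ((1 - r * t) * (Cv w t k (G * G) (lin (w i) ^ 2)
          - 2 * Ex w t k G * Cv w t k G (lin (w i) ^ 2))
        - 1 / 4 * Cv w t k (Dg G) (lin (w i) ^ 2)) ≤
      Real.exp (-K * t) * ((1 - r * t) * ∑ i, Cv w t k G (lin (w i)) ^ 2) +
      ε * ∑ i, (∑ x, w i x ^ 2 + Ex w t k (lin (w i)) * (2 * ∑ x, k x * w i x)) := by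
    rw [Finset.mul_sum, Finset.mul_sum, Finset.mul_sum, Finset.mul_sum, ← Finset.sum_add_distrib]
    refine Finset.sum_le_sum fun i _ => ?_
    obtain ⟨c1, c2⟩ := hspace i
    linear_combination (1 / 2) * c2 + Ex w t k (lin (w i)) * c1
  have hfin : Real.exp (-K * t) * (-r * Cv w t k G G + (1 - r * t) *
      ∑ i, Cv w t k G (lin (w i)) ^ 2) ≤ Real.exp (-K * t) * (K₁ * Psi w r t k G) :=
    mul_le_mul_of_nonneg_left hkey hE.le
  set Q := Real.exp (-K * t) * Psi w r t k G with hQ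
  have hQ0 : 0 < Q := mul_pos hE hPsipos
  have h1 : 0 ≤ -K * Q + K₁ * Q + ε * ((2 * W + n * W) * (1 + sq k)) := by
    have := mul_le_mul_of_nonneg_left hdrift hε.le
    rw [hQ]
    linarith
  have h2 : ε * ((2 * W + n * W) * (1 + sq k)) ≤ (2 * W + n * W) * Q := by
    have : 0 ≤ 2 * W + n * W := by positivity
    nlinarith
  have h3 : K₁ * Q ≤ |K₁| * Q := mul_le_mul_of_nonneg_right (le_abs_self _) hQ0.le
  rw [hK] at h1
  linarith

/-! ### The covariance bound and the spectral gap -/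

/-- The covariance matrix of the spins under `μ_{s,h}` is at most `1 / (1 - r s)`, for every `h`. -/
lemma linear_variance (w : Λ → Λ → ℝ) (r : ℝ) (hr0 : 0 ≤ r) (hr1 : r < 1)
    (hw : ∀ v : Λ → ℝ, ∑ i, (∑ x, w i x * v x) ^ 2 ≤ r * ∑ x, v x ^ 2)
    (s : ℝ) (hs : s ∈ Set.Icc (0 : ℝ) 1) (h u : Λ → ℝ) :
    Cv w s h (lin u) (lin u) ≤ 1 / (1 - r * s) * ∑ x, u x ^ 2 := by
  have scale : ∀ s h (l : ℝ), (∀ u : Λ → ℝ, ∑ x, u x ^ 2 = 1 → Cv w s h (lin u) (lin u) ≤ l) →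
      ∀ u : Λ → ℝ, Cv w s h (lin u) (lin u) ≤ l * ∑ x, u x ^ 2 := by
    intro s h l hl u
    set q := ∑ x, u x ^ 2 with hq
    have hq0 : 0 ≤ q := Finset.sum_nonneg fun x _ => sq_nonneg _
    rcases hq0.eq_or_lt with h0 | h0
    · have hu : u = (0 : ℝ) • u := by
        ext x
        have := (Finset.sum_eq_zero_iff_of_nonneg (fun x _ => sq_nonneg (u x))).1 (hq ▸ h0.symm) x
          (Finset.mem_univ x)
        simpa using this
      rw [hu, lin_smul, Cv_smul_right, ← h0]; simp
    · have h1 := hl ((Real.sqrt q)⁻¹ • u) (by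
        simp only [Pi.smul_apply, smul_eq_mul, mul_pow, ← Finset.mul_sum, ← hq, inv_pow,
          Real.sq_sqrt hq0]
        exact inv_mul_cancel₀ h0.ne')
      rw [lin_smul, Cv_smul_right, Cv_comm, Cv_smul_right, ← mul_assoc, ← mul_inv,
        Real.mul_self_sqrt hq0, inv_mul_le_iff₀ h0] at h1
      linarith
  have hrs : ∀ s ∈ Set.Icc (0 : ℝ) 1, 0 < 1 - r * s := fun s hs => by nlinarith [hs.1, hs.2]
  have hPsi : ∀ s h (u : Λ → ℝ), ∑ x, u x ^ 2 = 1 →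
      Psi w r s h (lin u) = (1 - r * s) * Cv w s h (lin u) (lin u) - 1 := fun s h u hu => by
    rw [Psi, Dg_lin, Ex_const, hu]; ring
  have hb : ∀ u : Λ → ℝ, ∑ x, u x ^ 2 = 1 → ∀ σ, lin u σ ^ 2 ≤ (Fintype.card Λ : ℝ) :=
    fun u hu σ => by simpa [hu] using lin_sq_le u σ
  have hcpt : IsCompact {u : Λ → ℝ | ∑ x, u x ^ 2 = 1} := by
    refine IsCompact.of_isClosed_subset (isCompact_Icc (a := fun _ => -1) (b := fun _ => 1))
      (isClosed_eq (by fun_prop) continuous_const) fun u hu => ?_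
    have hu : ∑ x, u x ^ 2 = 1 := hu
    have h1 : ∀ x, |u x| ≤ 1 := fun x => by
      refine (sq_le_one_iff_abs_le_one _).1 (le_trans ?_ hu.le)
      exact Finset.single_le_sum (f := fun x => u x ^ 2) (fun y _ => sq_nonneg _) (Finset.mem_univ x)
    exact ⟨fun x => (abs_le.1 (h1 x)).1, fun x => (abs_le.1 (h1 x)).2⟩
  have hlinc : Continuous (lin : (Λ → ℝ) → (Λ → Bool) → ℝ) := by unfold lin; fun_prop
  refine scale s h _ (fun u hu => ?_) u
  have hmp := max_principle w r hr0 (Set.image lin {u : Λ → ℝ | ∑ x, u x ^ 2 = 1}) (hcpt.image hlinc)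
    (Fintype.card Λ) (by rintro _ ⟨u, hu, rfl⟩; exact hb u hu) (r * Fintype.card Λ) ?_
    s hs h (lin u) ⟨u, hu, rfl⟩
  · rw [hPsi s h u hu] at hmp
    rw [le_div_iff₀ (hrs s hs)]
    linarith
  · rintro s hs h _ ⟨u, hu, rfl⟩ hpos hmax
    have hu : ∑ x, u x ^ 2 = 1 := hu
    have h1rs := hrs s hs
    set l := Cv w s h (lin u) (lin u) with hl
    have hl0 : 0 ≤ l := Cv_self_nonneg w s h (lin u)
    have hlmax : ∀ v : Λ → ℝ, ∑ x, v x ^ 2 = 1 → Cv w s h (lin v) (lin v) ≤ l := fun v hv => by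
      have := hmax (lin v) ⟨v, hv, rfl⟩
      rw [hPsi s h u hu, hPsi s h v hv] at this
      exact le_of_mul_le_mul_left (by linarith) h1rs
    have hln : l ≤ Fintype.card Λ := by
      have h1 : Ex w s h (lin u * lin u) ≤ Fintype.card Λ :=
        (Ex_mono w s h fun σ => by simpa [pow_two] using hb u hu σ).trans
          (Ex_const w s h (Fintype.card Λ : ℝ)).le
      have := mul_self_nonneg (Ex w s h (lin u))
      rw [hl, Cv]; linarith
    have h2 := sum_Cv_sq_le w r hr0 hw s h l (scale s h l hlmax) hl0 (lin u)
    rw [← hl] at h2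
    calc -r * l + (1 - r * s) * ∑ i, Cv w s h (lin u) (lin (w i)) ^ 2
        ≤ -r * l + (1 - r * s) * (r * l * l) := by
          have := mul_le_mul_of_nonneg_left h2 h1rs.le
          linarith
      _ = r * l * Psi w r s h (lin u) := by rw [hPsi s h u hu, ← hl]; ring
      _ ≤ r * Fintype.card Λ * Psi w r s h (lin u) :=
          mul_le_mul_of_nonneg_right (mul_le_mul_of_nonneg_left hln hr0) hpos.le

/-- The spectral gap inequality at the end point `s = 1`, `h = 0` of the interpolation. -/
lemma tilted_gap (w : Λ → Λ → ℝ) (r : ℝ) (hr0 : 0 ≤ r) (hr1 : r < 1)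
    (hw : ∀ v : Λ → ℝ, ∑ i, (∑ x, w i x * v x) ^ 2 ≤ r * ∑ x, v x ^ 2)
    (F : (Λ → Bool) → ℝ) :
    Cv w 1 0 F F ≤ 1 / (4 * (1 - r)) * Ex w 1 0 (Dg F) := by
  have hmp := max_principle w r hr0 {F} isCompact_singleton (∑ σ, F σ ^ 2)
    (by
      intro F' hF' σ
      rw [Set.mem_singleton_iff.1 hF']
      exact Finset.single_le_sum (f := fun σ => F σ ^ 2) (fun _ _ => sq_nonneg _) (Finset.mem_univ σ))
    0 ?_ 1 ⟨zero_le_one, le_rfl⟩ 0 F rfl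
  · rw [Psi, mul_one] at hmp
    have h1 : 0 < 1 - r := by linarith
    rw [one_div, inv_mul_eq_div, le_div_iff₀ (by positivity)]
    linarith
  · intro s hs h F' hF' _ _
    rw [Set.mem_singleton_iff.1 hF']
    have h1rs : 0 < 1 - r * s := by nlinarith [hs.1, hs.2]
    have h2 := sum_Cv_sq_le w r hr0 hw s h (1 / (1 - r * s))
      (linear_variance w r hr0 hr1 hw s hs h) (by positivity) F
    have h3 := mul_le_mul_of_nonneg_left h2 h1rs.le
    have h4 : (1 - r * s) * (r * (1 / (1 - r * s)) * Cv w s h F F) = r * Cv w s h F F := by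
      field_simp
    linarith

end
end
end IsingGap

/-- Spectral gap inequality for the Ising model under the spectral condition `‖M‖ < 1`:
there is a constant `C` depending only on the bound `r < 1` for the largest eigenvalue
(and not on the finite set `Λ` or on `M` otherwise) such that
`Var_ν(F) ≤ C Σ_x ν((F(σ) - F(σˣ))²)` for every `F`. -/
theorem ising_spectral_gap
    (r : ℝ) (hr : r < 1) :
    ∃ C : ℝ,
      ∀ (Λ : Type) (_ : Fintype Λ) (_ : DecidableEq Λ) (_ : Nonempty Λ)
        (M : Matrix Λ Λ ℝ), M.IsSymm → M.PosDef →
        (∀ v : Λ → ℝ, v ⬝ᵥ M.mulVec v ≤ r * (v ⬝ᵥ v)) →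
        ∀ (spin : Bool → ℝ), spin = (fun b => if b then 1 else -1) →
        ∀ (ν : (Λ → Bool) → ℝ),
          (∀ σ, ν σ =
            Real.exp (-(1 / 2) * ∑ x, ∑ y, M x y * spin (σ x) * spin (σ y)) /
              ∑ σ' : Λ → Bool,
                Real.exp (-(1 / 2) * ∑ x, ∑ y, M x y * spin (σ' x) * spin (σ' y))) →
        ∀ F : (Λ → Bool) → ℝ,
          (∑ σ : Λ → Bool, ν σ * (F σ) ^ 2) - (∑ σ : Λ → Bool, ν σ * F σ) ^ 2
            ≤ C * ∑ x : Λ, ∑ σ : Λ → Bool,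
                ν σ * (F σ - F (Function.update σ x (!(σ x)))) ^ 2 := by
  refine ⟨1 / (4 * (1 - r)), ?_⟩
  intro Λ _ _ _ M hsymm hpd hMr spin hspin ν hν F
  have hsp : spin = IsingGap.sp := by rw [hspin]; rfl
  subst hsp
  have hMnn : ∀ v : Λ → ℝ, 0 ≤ v ⬝ᵥ M.mulVec v := fun v => by
    simpa using hpd.posSemidef.dotProduct_mulVec_nonneg v
  have hr0 : 0 ≤ r := by
    have h1 := hMr fun _ => 1
    have h2 := hMnn fun _ => 1
    have h3 : (0 : ℝ) < (fun _ : Λ => (1 : ℝ)) ⬝ᵥ (fun _ => 1) := by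
      simp [dotProduct, Fintype.card_pos]
    exact nonneg_of_mul_nonneg_left (h2.trans h1) h3
  have hB : ∀ v : Λ → ℝ, v ⬝ᵥ (r • (1 : Matrix Λ Λ ℝ) - M).mulVec v =
      r * (v ⬝ᵥ v) - v ⬝ᵥ M.mulVec v := fun v => by
    simp [sub_mulVec, dotProduct_sub, smul_mulVec, dotProduct_smul]
  have hBpsd : (r • (1 : Matrix Λ Λ ℝ) - M).PosSemidef := by
    refine Matrix.PosSemidef.of_dotProduct_mulVec_nonneg ?_ fun v => ?_
    · have : Mᵀ = M := hsymm
      simp [Matrix.IsHermitian, conjTranspose_eq_transpose_of_trivial, this]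
    · rw [star_trivial, hB]
      linarith [hMr v]
  obtain ⟨A, hA⟩ : ∃ A : Matrix Λ Λ ℝ, r • (1 : Matrix Λ Λ ℝ) - M = Aᴴ * A := by
    open scoped MatrixOrder Matrix.Norms.L2Operator in
    exact CStarAlgebra.nonneg_iff_eq_star_mul_self.mp hBpsd.nonneg
  have hAv : ∀ v : Λ → ℝ, ∑ i, (∑ x, A i x * v x) ^ 2 = r * ∑ x, v x ^ 2 -
      ∑ x, ∑ y, M x y * v x * v y := fun v => by
    have h1 := hB v
    rw [hA, conjTranspose_eq_transpose_of_trivial, ← mulVec_mulVec, dotProduct_mulVec,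
      vecMul_transpose] at h1
    simp only [dotProduct, mulVec, ← pow_two] at h1
    rw [h1]
    congr 1
    refine Finset.sum_congr rfl fun x _ => ?_
    rw [Finset.mul_sum]
    exact Finset.sum_congr rfl fun y _ => by ring
  have hw : ∀ v : Λ → ℝ, ∑ i, (∑ x, A i x * v x) ^ 2 ≤ r * ∑ x, v x ^ 2 := fun v => by
    have h1 := hMnn v
    have h2 : v ⬝ᵥ M.mulVec v = ∑ x, ∑ y, M x y * v x * v y := by
      simp only [dotProduct, mulVec, Finset.mul_sum]
      exact Finset.sum_congr rfl fun x _ => Finset.sum_congr rfl fun y _ => by ring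
    rw [hAv]; linarith
  have hgap := IsingGap.tilted_gap (fun i x => A i x) r hr0 hr hw F
  -- the diagonal term `r I` contributes the constant `r |Λ|` to `Σ_i (w_i · σ)²`
  set c := Real.exp (-(r * Fintype.card Λ / 2)) with hc
  have hc0 : c ≠ 0 := (Real.exp_pos _).ne'
  have hwt : ∀ σ : Λ → Bool, Real.exp (-(1 / 2) * ∑ x, ∑ y, M x y * IsingGap.sp (σ x) *
      IsingGap.sp (σ y)) = c * IsingGap.wt (fun i x => A i x) 1 0 σ := fun σ => by
    have h1 := hAv fun x => IsingGap.sp (σ x)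
    simp only [IsingGap.sp_sq] at h1
    rw [hc, IsingGap.wt, ← Real.exp_add]
    congr 1
    simp only [IsingGap.lin, h1]
    simp
    ring
  have hEx : ∀ G : (Λ → Bool) → ℝ, ∑ σ, ν σ * G σ = IsingGap.Ex (fun i x => A i x) 1 0 G := by
    intro G
    simp only [hν, hwt, ← Finset.mul_sum, IsingGap.Ex, IsingGap.Nm, Finset.sum_div,
      Pi.one_apply, one_mul]
    refine Finset.sum_congr rfl fun σ _ => ?_
    rw [mul_div_mul_left _ _ hc0]; ring
  have h1 : ∑ σ, ν σ * F σ ^ 2 = IsingGap.Ex (fun i x => A i x) 1 0 (F * F) := by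
    rw [← hEx]; simp [pow_two]
  have h2 : ∑ x : Λ, ∑ σ : Λ → Bool, ν σ * (F σ - F (Function.update σ x (!(σ x)))) ^ 2 =
      IsingGap.Ex (fun i x => A i x) 1 0 (IsingGap.Dg F) := by
    rw [← hEx, Finset.sum_comm]
    simp [IsingGap.Dg, IsingGap.flip, Finset.mul_sum]
  rw [h1, h2, hEx, pow_two]
  exact hgap
end
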